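/- arXiv:1408.0632 — 2 statements merged into one kernel-verified Lean document; each statement's English description precedes it below -/
import Mathlib

section
/- (i) 2·√π·x^{3/4}·e^{(2/3)·x^{3/2}}·(1/3 − ∫_0^x Ai(u) du) → 1 as x → ∞. (ii) There is C > 0 with |∫_{−x}^0 Ai(u) du − 2/3| ≤ C·x^{−3/4} for all x ≥ 1. (iii) Ai is Lebesgue integrable on (a, ∞) for every a ∈ ℝ, and there is C > 0 with |1 − ∫_{−x}^∞ Ai(u) du| ≤ C·x^{−3/4} for all x ≥ 1. -/
open MeasureTheory Filter Set

noncomputable section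

/-- The Airy function `Ai(x) = (1/π)·lim_{b→∞} ∫_0^b cos(t³/3 + x·t) dt`. -/
def Ai (x : ℝ) : ℝ :=
  (1 / Real.pi) *
    limUnder Filter.atTop (fun b : ℝ => ∫ t in (0:ℝ)..b, Real.cos (t ^ 3 / 3 + x * t))

/-- The Airy kernel. -/
def KAi (x y : ℝ) : ℝ :=
  if x = y then (deriv Ai x) ^ 2 - x * (Ai x) ^ 2
  else (Ai x * deriv Ai y - deriv Ai x * Ai y) / (x - y)

/-- One-point correlation function of the Airy₂ random point field. -/
def rho (x : ℝ) : ℝ := (deriv Ai x) ^ 2 - x * (Ai x) ^ 2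

/-- Probabilists' Hermite polynomial `Ĥ_m(x) = (−1)^m e^{x²/2} (d/dx)^m e^{−x²/2}`. -/
def hermiteP (m : ℕ) (x : ℝ) : ℝ :=
  (-1 : ℝ) ^ m * Real.exp (x ^ 2 / 2) * iteratedDeriv m (fun t => Real.exp (-t ^ 2 / 2)) x

/-- Normalized oscillator function `φ_m`. -/
def osc (m : ℕ) (x : ℝ) : ℝ :=
  (2 * Real.pi) ^ (-(1:ℝ)/4) * ((m.factorial : ℝ)) ^ (-(1:ℝ)/2) *
    Real.exp (-x ^ 2 / 4) * hermiteP m x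

/-- `ψ_mⁿ(x) = n^{1/12}·φ_m(2√n + n^{−1/6}·x)`. -/
def psiUp (n m : ℕ) (x : ℝ) : ℝ :=
  (n : ℝ) ^ ((1:ℝ)/12) * osc m (2 * Real.sqrt n + (n : ℝ) ^ (-(1:ℝ)/6) * x)

/-- `ψ_n = ψ_nⁿ`. -/
def psiN (n : ℕ) : ℝ → ℝ := psiUp n n

/-- The finite-`n` Airy kernel. -/
def KAiN (n : ℕ) (x y : ℝ) : ℝ :=
  if x = y then
    (deriv (psiN n) x) ^ 2 - psiN n x * deriv (deriv (psiN n)) x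
      - (1 / (2 * (n : ℝ) ^ ((1:ℝ)/3))) * (psiN n x) ^ 2
  else
    (psiN n x * deriv (psiN n) y - deriv (psiN n) x * psiN n y) / (x - y)
      - (1 / (2 * (n : ℝ) ^ ((1:ℝ)/3))) * (psiN n x * psiN n y)

/-- `(εf)(x) = (1/2)·∫_ℝ sign(x − y)·f(y) dy`. -/
def epsF (f : ℝ → ℝ) (x : ℝ) : ℝ := (1/2) * ∫ y : ℝ, Real.sign (x - y) * f y

/-- `εψ_n`. -/
def epsPsi (n : ℕ) : ℝ → ℝ := epsF (psiN n)

/-- `J₁(x,y) = K_Ai(x,y) + (1/2)·Ai(x)·(1 − ∫_y^∞ Ai(u) du)`. -/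
def J1 (x y : ℝ) : ℝ := KAi x y + (1/2) * Ai x * (1 - ∫ u in Set.Ioi y, Ai u)

/-- Scalar part of the quaternion product of Airy₁ kernels. -/
def L1 (x y : ℝ) : ℝ :=
  J1 x y * J1 y x -
    deriv (fun v => J1 x v) y * ((∫ u in x..y, J1 u x) - (1/2) * Real.sign (y - x))

/-- `J₁ⁿ(x,y) = K_Aiⁿ(x,y) + (1/2)·ψ_{n−1}ⁿ(x)·(εψ_n)(y)`. -/
def J1N (n : ℕ) (x y : ℝ) : ℝ :=
  KAiN n x y + (1/2) * psiUp n (n - 1) x * epsPsi n y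

/-- Scalar part of the quaternion product of finite-`n` Airy₁ kernels. -/
def L1N (n : ℕ) (x y : ℝ) : ℝ :=
  J1N n x y * J1N n y x -
    deriv (fun v => J1N n x v) y * ((∫ u in x..y, J1N n u x) - (1/2) * Real.sign (y - x))

/-- `ρ̂(x) = (1/π)·√(−x)` for `x < 0`, and `0` otherwise. -/
def rhoHat (x : ℝ) : ℝ := if x < 0 then Real.sqrt (-x) / Real.pi else 0

/-- `ρ̂ⁿ(x) = (1/π)·√(−x·(1 + x/(4·n^{2/3})))` on `(−4n^{2/3}, 0)`, and `0` otherwise. -/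
def rhoHatN (n : ℕ) (x : ℝ) : ℝ :=
  if -(4 * (n : ℝ) ^ ((2:ℝ)/3)) < x ∧ x < 0 then
    Real.sqrt (-x * (1 + x / (4 * (n : ℝ) ^ ((2:ℝ)/3)))) / Real.pi
  else 0

/-- `G_{a,b,c}(x,y) = |x|^{−a}·|y|^{−b}·|x−y|^{−c}`. -/
def Gf (a b c : ℝ) (x y : ℝ) : ℝ := |x| ^ (-a) * |y| ^ (-b) * |x - y| ^ (-c)

/-- `Ĝ_{a,b,c}(x,y) = G_{a,b,c}(x,y) + G_{a,b,c}(y,x)`. -/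
def Ghat (a b c : ℝ) (x y : ℝ) : ℝ := Gf a b c x y + Gf a b c y x

/-- Soft-edge one-point correlation function of the `n`-point GUE ensemble. -/
def rhoN (n : ℕ) (x : ℝ) : ℝ :=
  (deriv (psiN n) x) ^ 2 - (x ^ 2 / (4 * (n : ℝ) ^ ((2:ℝ)/3)) + x) * (psiN n x) ^ 2

end

/-!
Pushing the contour of `exp (I * (z ^ 3 / 3 + w * z))` off the real axis shows that `Ai` is the
real part of an entire function `A`. Let `D` be the antiderivative of `A` with `D 0 = 0`; by
Frullani's integral it tends to `1 / 3` at `+∞`. Dividing the integrand by `-I * z` gives an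
antiderivative of `-A` vanishing at `+∞`, so that for every `c > 0`
`1 / 3 - D w = (2 * π)⁻¹ * ∫ I / z * exp (I * (z ^ 3 / 3 + w * z))` over the line `im z = c`.

For `w = x → +∞`, the line `c = √x` passes through the saddle point, and rescaling leaves a
Gaussian integral. On the negative axis, the cube roots of unity `1, ω, ω ^ 2` satisfy
`D w + D (ω * w) + D (ω ^ 2 * w) = 0`, which replaces `-x` by the two points with real part `x / 2`
and imaginary part `± √3 / 2 * x`; there `c = √(3 * x / 4)` makes the exponent in the Gaussian
bound for the line integral vanish, and only `x ^ (-3 / 4)` remains.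
-/

section ExponentialIntegrals

open Complex Topology

lemma norm_exp_sub_exp_le {a b : ℂ} {M : ℝ} (ha : a.re ≤ M) (hb : b.re ≤ M) :
    ‖exp a - exp b‖ ≤ Real.exp M * ‖a - b‖ :=
  (convex_halfSpace_re_le M).norm_image_sub_le_of_norm_hasDerivWithin_le
    (fun z _ => (hasDerivAt_exp z).hasDerivWithinAt)
    (fun z hz => (norm_exp z).trans_le (Real.exp_le_exp.mpr hz)) hb ha

lemma hasDerivAt_integral_mul_exp_sub {α : Type*} [MeasurableSpace α] {μ : Measure α}
    {k q h : α → ℂ} {w : ℂ} {ε : ℝ} (hε : 0 < ε)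
    (hk : AEStronglyMeasurable k μ) (hh : AEStronglyMeasurable h μ)
    (hint : Integrable (fun x => k x * exp (w * h x) - q x) μ)
    (hbound : Integrable (fun x => ‖k x * h x‖ * Real.exp ((w * h x).re + ε * ‖h x‖)) μ) :
    HasDerivAt (fun v => ∫ x, (k x * exp (v * h x) - q x) ∂μ)
      (∫ x, k x * h x * exp (w * h x) ∂μ) w := by
  have hexp (v : ℂ) : AEStronglyMeasurable (fun x => exp (v * h x)) μ :=
    continuous_exp.comp_aestronglyMeasurable (hh.const_mul v)
  have hq : AEStronglyMeasurable q μ :=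
    ((hk.mul (hexp w)).sub hint.aestronglyMeasurable).congr (ae_of_all _ fun x => by simp)
  refine (hasDerivAt_integral_of_dominated_loc_of_deriv_le
    (F := fun v x => k x * exp (v * h x) - q x) (F' := fun v x => k x * h x * exp (v * h x))
    (Metric.ball_mem_nhds w hε) (.of_forall fun v => (hk.mul (hexp v)).sub hq) hint
    ((hk.mul hh).mul (hexp w)) (ae_of_all _ fun x v hv => ?_) hbound
    (ae_of_all _ fun x v _ => ?_)).2
  · have hre : ((v - w) * h x).re ≤ ε * ‖h x‖ := by
      refine (re_le_norm _).trans ?_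
      rw [norm_mul]
      gcongr
      exact (mem_ball_iff_norm.mp hv).le
    rw [norm_mul, norm_exp]
    gcongr
    rw [sub_mul, sub_re] at hre
    linarith
  · have hderiv := (((hasDerivAt_mul_const (h x) (x := v)).cexp).const_mul (k x)).sub_const (q x)
    exact hderiv.congr_deriv (by ring)

section HalfLine

variable {φ : ℝ → ℂ} {a b : ℂ} {M : ℝ}

lemma aestronglyMeasurable_of_integrableOn_mul_exp {s : Set ℝ}
    (hφ : IntegrableOn (fun r : ℝ => φ r * Real.exp (M * r)) s) :
    AEStronglyMeasurable φ (volume.restrict s) := by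
  have hexp : Continuous fun r : ℝ => (Real.exp (-(M * r)) : ℂ) := by fun_prop
  refine (hφ.aestronglyMeasurable.mul hexp.aestronglyMeasurable).congr (ae_of_all _ fun r => ?_)
  simp [mul_assoc, ← exp_add]

lemma integrableOn_Ioi_mul_exp_sub_exp_div (ha : a.re ≤ M) (hb : b.re ≤ M)
    (hφ : IntegrableOn (fun r : ℝ => φ r * Real.exp (M * r)) (Ioi 0)) :
    IntegrableOn (fun r : ℝ => φ r * ((exp (a * r) - exp (b * r)) / r)) (Ioi 0) := by
  have hquot : Measurable fun r : ℝ => (exp (a * r) - exp (b * r)) / r := by fun_prop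
  refine Integrable.mono' (hφ.norm.mul_const ‖a - b‖)
    ((aestronglyMeasurable_of_integrableOn_mul_exp hφ).mul hquot.aestronglyMeasurable)
    (ae_restrict_of_forall_mem measurableSet_Ioi fun r hr => ?_)
  have hr : 0 < r := hr
  have hre {z : ℂ} (hz : z.re ≤ M) : (z * r).re ≤ M * r := by
    rw [re_mul_ofReal]
    gcongr
  have hlip := norm_exp_sub_exp_le (hre ha) (hre hb)
  rw [← sub_mul, norm_mul, Complex.norm_of_nonneg hr.le] at hlip
  rw [norm_mul, norm_mul, norm_div, Complex.norm_of_nonneg hr.le,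
    Complex.norm_of_nonneg (Real.exp_pos _).le, mul_assoc]
  gcongr
  rw [div_le_iff₀ hr]
  linarith

lemma hasDerivAt_integral_Ioi_mul_exp_sub_exp_div (ha : a.re < M) (hb : b.re ≤ M)
    (hφ : IntegrableOn (fun r : ℝ => φ r * Real.exp (M * r)) (Ioi 0)) :
    HasDerivAt (fun z : ℂ => ∫ r in Ioi (0 : ℝ), φ r * ((exp (z * r) - exp (b * r)) / r))
      (∫ r in Ioi (0 : ℝ), φ r * exp (a * r)) a := by
  have hsplit (z : ℂ) (r : ℝ) : φ r * ((exp (z * r) - exp (b * r)) / r) =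
      φ r / r * exp (z * r) - φ r / r * exp (b * r) := by ring
  have hcancel {r : ℝ} (hr : r ∈ Ioi 0) : φ r / r * r = φ r :=
    div_mul_cancel₀ _ (ofReal_ne_zero.mpr (ne_of_gt hr))
  have hφ_meas := aestronglyMeasurable_of_integrableOn_mul_exp hφ
  have hint := integrableOn_Ioi_mul_exp_sub_exp_div ha.le hb hφ
  simp only [hsplit] at hint ⊢
  have hquot_meas : AEStronglyMeasurable (fun r => φ r / r) (volume.restrict (Ioi 0)) :=
    hφ_meas.div₀ (by fun_prop : Measurable fun r : ℝ => (r : ℂ)).aestronglyMeasurable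
  refine (hasDerivAt_integral_mul_exp_sub (k := fun r => φ r / r) (h := fun r => (r : ℂ))
    (sub_pos.mpr ha) hquot_meas (by fun_prop) hint (hφ.norm.congr ?_)).congr_deriv
    (setIntegral_congr_fun measurableSet_Ioi fun r hr => by simp only [hcancel hr])
  refine ae_restrict_of_forall_mem measurableSet_Ioi fun r hr => ?_
  have hr' : 0 ≤ r := hr.out.le
  simp only [hcancel hr, norm_mul, Complex.norm_of_nonneg hr',
    Complex.norm_of_nonneg (Real.exp_pos _).le, re_mul_ofReal]
  ring_nf

end HalfLine

lemma integral_Ioi_exp_sub_exp_div {a b : ℂ} (ha : a.re < 0) (hb : b.re < 0) :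
    ∫ r in Ioi (0 : ℝ), (exp (a * r) - exp (b * r)) / r = log (-b) - log (-a) := by
  set F : ℂ → ℂ := fun z => ∫ r in Ioi (0 : ℝ), (exp (z * r) - exp (b * r)) / r
  set U : Set ℂ := {z | z.re < 0}
  have hF (z : ℂ) (hz : z ∈ U) : HasDerivAt F (-z⁻¹) z := by
    obtain ⟨M, hM, hM₀⟩ := exists_between (max_lt (α := ℝ) hz hb)
    have hexp : IntegrableOn (fun r : ℝ => (1 : ℂ) * Real.exp (M * r)) (Ioi 0) := by
      simpa [IntegrableOn] using (integrableOn_exp_mul_Ioi hM₀ 0).ofReal (𝕜 := ℂ)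
    have hderiv := hasDerivAt_integral_Ioi_mul_exp_sub_exp_div
      ((le_max_left _ _).trans_lt hM) ((le_max_right _ _).trans hM.le) hexp
    simp only [one_mul, integral_exp_mul_complex_Ioi hz] at hderiv
    exact hderiv.congr_deriv (by simp [neg_div])
  have hlog (z : ℂ) (hz : z ∈ U) : HasDerivAt (fun z => log (-b) - log (-z)) (-z⁻¹) z := by
    have hslit : -z ∈ slitPlane := .inl (by simpa using hz.out)
    exact ((hasDerivAt_neg z).clog hslit |>.const_sub _).congr_deriv (by simp [neg_div_neg_eq])
  have hderiv_eq : EqOn (deriv F) (deriv fun z => log (-b) - log (-z)) U := fun z hz =>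
    (hF z hz).deriv.trans (hlog z hz).deriv.symm
  exact (isOpen_lt continuous_re continuous_const).eqOn_of_deriv_eq
    (convex_halfSpace_re_lt 0).isPreconnected
    (fun z hz => (hF z hz).differentiableAt.differentiableWithinAt)
    (fun z hz => (hlog z hz).differentiableAt.differentiableWithinAt)
    hderiv_eq (x := b) hb (by simp [F]) ha

end ExponentialIntegrals

namespace Ai

section Contour

open Complex Topology

/-- The primitive cube root of unity `exp (2 * π * I / 3)`. -/
noncomputable def ω : ℂ := ⟨-1 / 2, √3 / 2⟩

lemma omega_sq : ω ^ 2 = ⟨-1 / 2, -(√3 / 2)⟩ := by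
  apply Complex.ext <;> simp [ω, sq, div_mul_div_comm] <;> ring

lemma omega_pow_three : ω ^ 3 = 1 := by
  rw [pow_succ, omega_sq]
  apply Complex.ext <;> simp [ω, div_mul_div_comm]; ring

/-- The integrand `exp (I * (z ^ 3 / 3 + w * z))` of the contour integral representation of the
Airy function of a complex argument `w`. -/
noncomputable def wave (w z : ℂ) : ℂ := exp (I * (z ^ 3 / 3 + w * z))

/-- The factor `exp (-r ^ 3 / 3)` that `wave w` contributes along a ray of steepest descent. -/
noncomputable def weight (r : ℝ) : ℂ := (Real.exp (-r ^ 3 / 3) : ℝ)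

/-- The Laplace-type integral along a ray of steepest descent. -/
noncomputable def rayIntegral (w : ℂ) : ℂ := ∫ r in Ioi (0 : ℝ), weight r * exp (w * r)

/-- The Airy function of a complex argument. -/
noncomputable def entire (w : ℂ) : ℂ :=
  (2 * Real.pi * I)⁻¹ * (ω * rayIntegral (ω * w) - ω ^ 2 * rayIntegral (ω ^ 2 * w))

lemma differentiable_wave (w : ℂ) : Differentiable ℂ (wave w) := by
  unfold wave
  fun_prop

@[fun_prop]
lemma continuous_wave (w : ℂ) : Continuous (wave w) := (differentiable_wave w).continuous

lemma norm_wave (w : ℂ) (s y : ℝ) :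
    ‖wave w (s + y * I)‖ = Real.exp (-(y * s ^ 2) + y ^ 3 / 3 - w.re * y - w.im * s) := by
  rw [wave, norm_exp, I_mul_re]
  have hcube : ((s + y * I : ℂ) ^ 3 / 3) = ((s ^ 3 / 3 - s * y ^ 2 : ℝ) : ℂ) +
      ((s ^ 2 * y - y ^ 3 / 3 : ℝ) : ℂ) * I := by
    push_cast
    linear_combination (y ^ 3 / 3 * I + s * y ^ 2) * I_sq
  rw [hcube]
  congr 1
  simp only [add_im, mul_im, ofReal_re, ofReal_im, I_re, I_im, add_re, mul_re]
  ring

lemma wave_mul_of_cube_eq_I (w : ℂ) {d : ℂ} (hd : d ^ 3 = I) (r : ℝ) :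
    wave w (r * d) = weight r * exp (I * d * w * r) := by
  rw [wave, weight, ofReal_exp, ← exp_add]
  congr 1
  push_cast
  linear_combination I * r ^ 3 / 3 * hd + r ^ 3 / 3 * I_sq

lemma integrableOn_weight_mul_exp (M : ℝ) :
    IntegrableOn (fun r : ℝ => weight r * Real.exp (M * r)) (Ioi 0) := by
  have hreal : IntegrableOn (fun r : ℝ => Real.exp (-r ^ 3 / 3 + M * r)) (Ioi 0) := by
    refine integrable_of_isBigO_exp_neg one_pos (by fun_prop) (.of_bound 1 ?_)
    filter_upwards [eventually_ge_atTop (3 * (|M| + 1)), eventually_ge_atTop 1] with r hr hr_one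
    rw [Real.norm_eq_abs, Real.norm_eq_abs, Real.abs_exp, Real.abs_exp, one_mul, Real.exp_le_exp]
    have hsq : 3 * (M + 1) ≤ r ^ 2 := by nlinarith [abs_nonneg M, le_abs_self M]
    nlinarith
  refine (hreal.ofReal (𝕜 := ℂ)).congr (ae_of_all _ fun r => ?_)
  simp [weight, Real.exp_add]

lemma integrableOn_weight_mul_cexp (w : ℂ) :
    IntegrableOn (fun r : ℝ => weight r * exp (w * r)) (Ioi 0) := by
  have hmeas : Continuous fun r : ℝ => weight r * exp (w * r) := by
    unfold weight
    fun_prop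
  refine Integrable.mono (integrableOn_weight_mul_exp w.re) hmeas.aestronglyMeasurable
    (ae_of_all _ fun r => ?_)
  simp [norm_exp]

variable {w : ℂ} {G : ℂ → ℂ}

lemma tendsto_atTop_of_hasDerivAt_wave_mul (hG : ∀ z, HasDerivAt G (wave w z) z) {d : ℂ}
    (hd : d ^ 3 = I) :
    Tendsto (fun r : ℝ => G (r * d)) atTop (𝓝 (G 0 + d * rayIntegral (I * d * w))) := by
  have hderiv (r : ℝ) : HasDerivAt (fun r : ℝ => G (r * d))
      (d * (weight r * exp (I * d * w * r))) r := by
    have hline : HasDerivAt (fun r : ℝ => (r * d : ℂ)) d r := by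
      simpa using (ofRealCLM.hasDerivAt (x := r)).mul_const d
    exact ((hG _).comp r hline).congr_deriv (by rw [wave_mul_of_cube_eq_I w hd]; ring)
  have hcont : Continuous fun r : ℝ => d * (weight r * exp (I * d * w * r)) := by
    unfold weight
    fun_prop
  have hprim (r : ℝ) : G (r * d) =
      G 0 + ∫ t in (0 : ℝ)..r, d * (weight t * exp (I * d * w * t)) := by
    rw [intervalIntegral.integral_eq_sub_of_hasDerivAt (fun t _ => hderiv t)
      (hcont.intervalIntegrable _ _)]
    simp
  simp only [hprim]
  rw [rayIntegral, ← integral_const_mul]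
  exact (intervalIntegral_tendsto_integral_Ioi 0
    ((integrableOn_weight_mul_cexp (I * d * w)).const_mul d) tendsto_id).const_add _

lemma norm_wave_le_exp {y s : ℝ} (hy : 0 ≤ y) (hs : y ^ 2 ≤ s ^ 2 / 3) (hw : 3 * ‖w‖ ≤ s ^ 2) :
    ‖wave w (s + y * I)‖ ≤ Real.exp (|w.im| * |s|) * Real.exp (-(s ^ 2 / 2) * y) := by
  rw [norm_wave, ← Real.exp_add, Real.exp_le_exp]
  have him : -(w.im * s) ≤ |w.im| * |s| := by
    rw [← abs_mul]
    exact neg_le_abs _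
  have hre : -(w.re * y) ≤ s ^ 2 / 3 * y := by
    have := (abs_le.mp (abs_re_le_norm w)).1
    nlinarith
  nlinarith [mul_le_mul_of_nonneg_left hs hy]

lemma norm_integral_wave_vertical_le {c d s : ℝ} (hc : 0 ≤ c) (hcd : c ≤ d) (hs : s ≠ 0)
    (hds : d ^ 2 ≤ s ^ 2 / 3) (hw : 3 * ‖w‖ ≤ s ^ 2) :
    ‖∫ y in c..d, wave w (s + y * I)‖ ≤
      Real.exp (|w.im| * |s| - s ^ 2 / 2 * c) / (s ^ 2 / 2) := by
  have hk : -(s ^ 2 / 2) < 0 := neg_lt_zero.mpr (by positivity)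
  have hbound (y : ℝ) (hy : y ∈ Ioc c d) : ‖wave w (s + y * I)‖ ≤
      Real.exp (|w.im| * |s|) * Real.exp (-(s ^ 2 / 2) * y) := by
    have hy₀ : 0 ≤ y := hc.trans hy.1.le
    exact norm_wave_le_exp hy₀ ((pow_le_pow_left₀ hy₀ hy.2 2).trans hds) hw
  calc ‖∫ y in c..d, wave w (s + y * I)‖
      ≤ ∫ y in c..d, Real.exp (|w.im| * |s|) * Real.exp (-(s ^ 2 / 2) * y) :=
        intervalIntegral.norm_integral_le_of_norm_le hcd (.of_forall hbound)
          (by apply Continuous.intervalIntegrable; fun_prop)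
    _ ≤ Real.exp (|w.im| * |s|) * ∫ y in Ioi c, Real.exp (-(s ^ 2 / 2) * y) := by
        rw [intervalIntegral.integral_const_mul, intervalIntegral.integral_of_le hcd]
        exact mul_le_mul_of_nonneg_left (setIntegral_mono_set (integrableOn_exp_mul_Ioi hk c)
          (ae_of_all _ fun y => (Real.exp_pos _).le) Ioc_subset_Ioi_self.eventuallyLE)
          (Real.exp_pos _).le
    _ = Real.exp (|w.im| * |s| - s ^ 2 / 2 * c) / (s ^ 2 / 2) := by
        rw [integral_exp_mul_Ioi hk, neg_div_neg_eq, ← mul_div_assoc, ← Real.exp_add]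
        ring_nf

lemma integral_wave_vertical (hG : ∀ z, HasDerivAt G (wave w z) z) (s c d : ℝ) :
    I * ∫ y in c..d, wave w (s + y * I) = G (s + d * I) - G (s + c * I) := by
  have hderiv (y : ℝ) : HasDerivAt (fun y : ℝ => G (s + y * I)) (I * wave w (s + y * I)) y := by
    have hline : HasDerivAt (fun y : ℝ => (s + y * I : ℂ)) I y := by
      simpa using ((ofRealCLM.hasDerivAt (x := y)).mul_const I).const_add (s : ℂ)
    exact ((hG _).comp y hline).congr_deriv (mul_comm _ _)
  rw [← intervalIntegral.integral_const_mul]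
  exact intervalIntegral.integral_eq_sub_of_hasDerivAt (fun y _ => hderiv y)
    (by apply Continuous.intervalIntegrable; fun_prop)

lemma integral_wave_horizontal (hG : ∀ z, HasDerivAt G (wave w z) z) (c a b : ℝ) :
    ∫ s in a..b, wave w (s + c * I) = G (b + c * I) - G (a + c * I) := by
  have hderiv (s : ℝ) : HasDerivAt (fun s : ℝ => G (s + c * I)) (wave w (s + c * I)) s := by
    have hline : HasDerivAt (fun s : ℝ => (s + c * I : ℂ)) 1 s :=
      (ofRealCLM.hasDerivAt (x := s)).add_const _
    exact ((hG _).comp s hline).congr_deriv (mul_one _)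
  exact intervalIntegral.integral_eq_sub_of_hasDerivAt (fun s _ => hderiv s)
    (by apply Continuous.intervalIntegrable; fun_prop)

variable {c : ℝ}

lemma tendsto_sub_cocompact (hG : ∀ z, HasDerivAt G (wave w z) z) (hc : 0 ≤ c)
    (hcw : 0 < c ∨ w.im = 0) :
    Tendsto (fun s : ℝ => G (s + (|s| / √3 : ℝ) * I) - G (s + c * I)) (cocompact ℝ) (𝓝 0) := by
  have habs : Tendsto (fun s : ℝ => |s|) (cocompact ℝ) atTop := tendsto_norm_cocompact_atTop
  have hsq : Tendsto (fun s : ℝ => s ^ 2) (cocompact ℝ) atTop :=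
    ((tendsto_pow_atTop two_ne_zero).comp habs).congr fun s => sq_abs s
  -- When `c = 0` the right-hand side is `0`, by the convention for division by zero.
  have hexp (s : ℝ) : |w.im| * |s| - s ^ 2 / 2 * c ≤ w.im ^ 2 / (2 * c) := by
    rcases hcw with hc_pos | hw
    · rw [le_div_iff₀ (by positivity), ← sq_abs s, ← sq_abs w.im]
      linarith [sq_nonneg (|w.im| - |s| * c)]
    · simp only [hw, abs_zero]
      have : 0 ≤ s ^ 2 / 2 * c := by positivity
      simpa
  refine squeeze_zero_norm' (a := fun s => Real.exp (w.im ^ 2 / (2 * c)) / (s ^ 2 / 2)) ?_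
    ((hsq.atTop_div_const two_pos).const_div_atTop _)
  filter_upwards [habs.eventually_ge_atTop (c * √3), habs.eventually_gt_atTop 0,
    hsq.eventually_ge_atTop (3 * ‖w‖)] with s hs_ge hs_pos hs_norm
  have hs : s ≠ 0 := abs_pos.mp hs_pos
  have hds : (|s| / √3) ^ 2 ≤ s ^ 2 / 3 := by rw [div_pow, sq_abs, Real.sq_sqrt (by norm_num)]
  rw [← integral_wave_vertical hG, norm_mul, norm_I, one_mul]
  refine (norm_integral_wave_vertical_le hc ((le_div_iff₀ (by positivity)).mpr hs_ge) hs hds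
    hs_norm).trans ?_
  gcongr
  exact hexp s

lemma tendsto_atTop_add_mul_I (hG : ∀ z, HasDerivAt G (wave w z) z) (hc : 0 ≤ c)
    (hcw : 0 < c ∨ w.im = 0) :
    Tendsto (fun s : ℝ => G (s + c * I)) atTop
      (𝓝 (G 0 - I * (ω * rayIntegral (ω * w)))) := by
  have hd : (-I * ω) ^ 3 = I := by
    rw [mul_pow, omega_pow_three, mul_one, neg_pow, I_pow_three]; ring
  have hray := (tendsto_atTop_of_hasDerivAt_wave_mul hG hd).comp
    (tendsto_id.atTop_mul_const (show 0 < 2 / √3 by positivity))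
  refine ((hray.sub ((tendsto_sub_cocompact hG hc hcw).mono_left atTop_le_cocompact)).congr'
    ?_).trans (le_of_eq ?_)
  · filter_upwards [eventually_ge_atTop 0] with s hs
    have hcorner : ((s * (2 / √3) : ℝ) : ℂ) * (-I * ω) = s + (|s| / √3 : ℝ) * I := by
      rw [abs_of_nonneg hs]
      apply Complex.ext <;> simp [ω] <;> field_simp
    simp only [Function.comp_apply, id_eq, hcorner, sub_sub_cancel]
  · rw [show I * (-I * ω) * w = ω * w by linear_combination -ω * w * I_sq]
    ring_nf

lemma tendsto_atBot_add_mul_I (hG : ∀ z, HasDerivAt G (wave w z) z) (hc : 0 ≤ c)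
    (hcw : 0 < c ∨ w.im = 0) :
    Tendsto (fun s : ℝ => G (s + c * I)) atBot
      (𝓝 (G 0 - I * (ω ^ 2 * rayIntegral (ω ^ 2 * w)))) := by
  have hd : (-I * ω ^ 2) ^ 3 = I := by
    rw [mul_pow, ← pow_mul, mul_comm 2, pow_mul, omega_pow_three, one_pow, mul_one, neg_pow,
      I_pow_three]
    ring
  have hray := (tendsto_atTop_of_hasDerivAt_wave_mul hG hd).comp
    (tendsto_abs_atBot_atTop.atTop_mul_const (show 0 < 2 / √3 by positivity))
  refine ((hray.sub ((tendsto_sub_cocompact hG hc hcw).mono_left atBot_le_cocompact)).congr'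
    ?_).trans (le_of_eq ?_)
  · filter_upwards [eventually_le_atBot 0] with s hs
    have hcorner : ((|s| * (2 / √3) : ℝ) : ℂ) * (-I * ω ^ 2) = s + (|s| / √3 : ℝ) * I := by
      rw [abs_of_nonpos hs, omega_sq]
      apply Complex.ext <;> simp <;> field_simp
    simp only [Function.comp_apply, hcorner, sub_sub_cancel]
  · rw [show I * (-I * ω ^ 2) * w = ω ^ 2 * w by linear_combination -ω ^ 2 * w * I_sq]
    ring_nf

lemma tendsto_integral_wave (hc : 0 ≤ c) (hcw : 0 < c ∨ w.im = 0) :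
    Tendsto (fun b : ℝ => ∫ s in -b..b, wave w (s + c * I)) atTop
      (𝓝 (2 * Real.pi * entire w)) := by
  obtain ⟨G, hG⟩ := (differentiable_wave w).isExactOn_univ
  replace hG (z : ℂ) : HasDerivAt G (wave w z) z := hG z (mem_univ z)
  simp only [integral_wave_horizontal hG]
  refine ((tendsto_atTop_add_mul_I hG hc hcw).sub ((tendsto_atBot_add_mul_I hG hc hcw).comp
    tendsto_neg_atTop_atBot)).trans (le_of_eq ?_)
  rw [entire]
  congr 1
  rw [mul_inv, inv_I]
  field_simp
  ring

end Contour

section RealAxis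

open Complex Topology

lemma re_integral_wave (x b : ℝ) : (∫ s in -b..b, wave x s).re =
    2 * ∫ t in (0 : ℝ)..b, Real.cos (t ^ 3 / 3 + x * t) := by
  have hre (s : ℝ) : (wave x s).re = Real.cos (s ^ 3 / 3 + x * s) := by
    rw [wave, ← exp_ofReal_mul_I_re, mul_comm I]
    push_cast
    rfl
  have hcos (a b : ℝ) : IntervalIntegrable (fun s => Real.cos (s ^ 3 / 3 + x * s)) volume a b := by
    apply Continuous.intervalIntegrable
    fun_prop
  have heven : ∫ s in -b..0, Real.cos (s ^ 3 / 3 + x * s) =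
      ∫ s in (0 : ℝ)..b, Real.cos (s ^ 3 / 3 + x * s) := by
    rw [← neg_zero, ← intervalIntegral.integral_comp_neg, neg_zero]
    congr 1 with s
    rw [← Real.cos_neg]
    ring_nf
  have hwave : IntervalIntegrable (fun s : ℝ => wave x s) volume (-b) b := by
    apply Continuous.intervalIntegrable
    fun_prop
  rw [← reCLM_apply, ← reCLM.intervalIntegral_comp_comm hwave]
  simp only [reCLM_apply, hre]
  rw [← intervalIntegral.integral_add_adjacent_intervals (hcos (-b) 0) (hcos 0 b), heven, two_mul]

lemma eq_re_entire (x : ℝ) : Ai x = (entire x).re := by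
  have hlim := (continuous_re.tendsto _).comp
    (tendsto_integral_wave (w := x) le_rfl (.inr (ofReal_im x)))
  simp only [Function.comp_def, ofReal_zero, zero_mul, add_zero, re_integral_wave] at hlim
  have hscaled := hlim.const_mul (1 / 2)
  simp only [one_div, inv_mul_cancel_left₀ (two_ne_zero' ℝ)] at hscaled
  rw [Ai, hscaled.limUnder_eq, show (2 * Real.pi * entire x : ℂ) = (2 * Real.pi : ℝ) * entire x by
    push_cast; rfl, re_ofReal_mul]
  field_simp

end RealAxis

section Line

open Complex Topology

variable {c : ℝ}

lemma norm_wave_eq_gaussian (hc : 0 < c) (w : ℂ) (s : ℝ) : ‖wave w (s + c * I)‖ =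
    Real.exp (c ^ 3 / 3 - c * w.re + w.im ^ 2 / (4 * c)) *
      Real.exp (-c * (s + w.im / (2 * c)) ^ 2) := by
  rw [norm_wave, ← Real.exp_add]
  congr 1
  field_simp
  ring

lemma integrable_wave (hc : 0 < c) (w : ℂ) : Integrable fun s : ℝ => wave w (s + c * I) := by
  have hcont : Continuous fun s : ℝ => wave w (s + c * I) := by fun_prop
  rw [← integrable_norm_iff hcont.aestronglyMeasurable]
  simp only [norm_wave_eq_gaussian hc]
  exact ((integrable_exp_neg_mul_sq hc).comp_add_right _).const_mul _

lemma integral_norm_wave (hc : 0 < c) (w : ℂ) : ∫ s : ℝ, ‖wave w (s + c * I)‖ =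
    √(Real.pi / c) * Real.exp (c ^ 3 / 3 - c * w.re + w.im ^ 2 / (4 * c)) := by
  simp only [norm_wave_eq_gaussian hc]
  rw [integral_const_mul, integral_add_right_eq_self (fun s => Real.exp (-c * s ^ 2)),
    integral_gaussian, mul_comm]

lemma integral_wave (hc : 0 < c) (w : ℂ) :
    ∫ s : ℝ, wave w (s + c * I) = 2 * Real.pi * entire w :=
  tendsto_nhds_unique
    (intervalIntegral_tendsto_integral (integrable_wave hc w) tendsto_neg_atTop_atBot tendsto_id)
    (tendsto_integral_wave hc.le (.inl hc))

lemma norm_entire_le (hc : 0 < c) (w : ℂ) : ‖entire w‖ ≤ (2 * Real.pi)⁻¹ *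
    (√(Real.pi / c) * Real.exp (c ^ 3 / 3 - c * w.re + w.im ^ 2 / (4 * c))) := by
  rw [← div_eq_inv_mul, le_div_iff₀' Real.two_pi_pos, ← integral_norm_wave hc]
  calc 2 * Real.pi * ‖entire w‖ = ‖∫ s : ℝ, wave w (s + c * I)‖ := by
        simp [integral_wave hc, abs_of_pos Real.pi_pos]
    _ ≤ _ := norm_integral_le_integral_norm _

/-- The antiderivative of `-entire` vanishing at `+∞`, as an integral over the line `im z = c`.
It does not depend on `c > 0`. -/
noncomputable def tail (c : ℝ) (w : ℂ) : ℂ :=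
  (2 * Real.pi : ℂ)⁻¹ * ∫ s : ℝ, I / (s + c * I) * wave w (s + c * I)

lemma le_norm_add_mul_I (s c : ℝ) : c ≤ ‖(s + c * I : ℂ)‖ := by
  simpa using im_le_norm (s + c * I)

lemma add_mul_I_ne_zero (hc : 0 < c) (s : ℝ) : (s + c * I : ℂ) ≠ 0 :=
  norm_pos_iff.mp (hc.trans_le (le_norm_add_mul_I s c))

lemma continuous_div_add_mul_I (hc : 0 < c) : Continuous fun s : ℝ => I / (s + c * I) :=
  continuous_const.div (by fun_prop) (add_mul_I_ne_zero hc)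

lemma norm_div_mul_wave_le (hc : 0 < c) (w : ℂ) (s : ℝ) :
    ‖I / (s + c * I) * wave w (s + c * I)‖ ≤ c⁻¹ * ‖wave w (s + c * I)‖ := by
  rw [norm_mul, norm_div, norm_I, one_div]
  gcongr
  exact le_norm_add_mul_I s c

lemma integrable_div_mul_wave (hc : 0 < c) (w : ℂ) :
    Integrable fun s : ℝ => I / (s + c * I) * wave w (s + c * I) := by
  have hquot := continuous_div_add_mul_I hc
  exact ((integrable_wave hc w).norm.const_mul c⁻¹).mono' (by fun_prop)
    (ae_of_all _ (norm_div_mul_wave_le hc w))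

lemma norm_tail_le (hc : 0 < c) (w : ℂ) : ‖tail c w‖ ≤ (2 * Real.pi)⁻¹ *
    (c⁻¹ * (√(Real.pi / c) * Real.exp (c ^ 3 / 3 - c * w.re + w.im ^ 2 / (4 * c)))) := by
  rw [tail, norm_mul, ← integral_norm_wave hc, ← integral_const_mul]
  have hconst : ‖(2 * Real.pi : ℂ)⁻¹‖ = (2 * Real.pi)⁻¹ := by simp [abs_of_pos Real.pi_pos]
  rw [hconst]
  gcongr
  exact norm_integral_le_of_norm_le ((integrable_wave hc w).norm.const_mul _)
    (ae_of_all _ (norm_div_mul_wave_le hc w))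

lemma tendsto_tail_atTop (hc : 0 < c) : Tendsto (fun x : ℝ => tail c x) atTop (𝓝 0) := by
  refine squeeze_zero_norm (fun x => norm_tail_le hc x) ?_
  have hexponent : Tendsto (fun x : ℝ => c ^ 3 / 3 - c * x) atTop atBot :=
    tendsto_atBot_add_const_left _ _ (tendsto_neg_atTop_atBot.comp (tendsto_id.const_mul_atTop hc))
  have hexp := Real.tendsto_exp_atBot.comp hexponent
  simpa using ((hexp.const_mul (√(Real.pi / c))).const_mul c⁻¹).const_mul (2 * Real.pi)⁻¹

lemma norm_wave_mul_exp_norm_le (c : ℝ) (w : ℂ) (s : ℝ) :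
    ‖wave w (s + c * I)‖ * Real.exp ‖(s + c * I : ℂ)‖ ≤
      Real.exp |c| * (‖wave (w - I) (s + c * I)‖ + ‖wave (w + I) (s + c * I)‖) := by
  have hnorm : ‖(s + c * I : ℂ)‖ ≤ |c| + |s| := by
    simpa [add_comm] using norm_add_le (s : ℂ) (c * I)
  have hexp_abs : Real.exp |s| ≤ Real.exp s + Real.exp (-s) := by
    rcases abs_choice s with h | h <;> rw [h] <;> linarith [Real.exp_pos s, Real.exp_pos (-s)]
  have hshift : ‖wave w (s + c * I)‖ * (Real.exp s + Real.exp (-s)) =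
      ‖wave (w - I) (s + c * I)‖ + ‖wave (w + I) (s + c * I)‖ := by
    simp only [norm_wave, sub_re, add_re, sub_im, add_im, I_re, I_im, mul_add, ← Real.exp_add]
    ring_nf
  calc ‖wave w (s + c * I)‖ * Real.exp ‖(s + c * I : ℂ)‖
      ≤ ‖wave w (s + c * I)‖ * (Real.exp |c| * (Real.exp s + Real.exp (-s))) := by
        gcongr
        refine (Real.exp_le_exp.mpr hnorm).trans ?_
        rw [Real.exp_add]
        gcongr
    _ = _ := by rw [← hshift]; ring

lemma integrable_norm_wave_mul_exp_norm (hc : 0 < c) (w : ℂ) :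
    Integrable fun s : ℝ => ‖wave w (s + c * I)‖ * Real.exp ‖(s + c * I : ℂ)‖ := by
  refine ((((integrable_wave hc (w - I)).norm.add (integrable_wave hc (w + I)).norm).const_mul
    (Real.exp |c|))).mono' (by fun_prop) (ae_of_all _ fun s => ?_)
  rw [Real.norm_of_nonneg (by positivity)]
  exact norm_wave_mul_exp_norm_le c w s

lemma hasDerivAt_tail (hc : 0 < c) (w : ℂ) : HasDerivAt (tail c) (-entire w) w := by
  have hwave (v z : ℂ) : exp (I * (z ^ 3 / 3)) * exp (v * (I * z)) = wave v z := by
    rw [wave, ← exp_add]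
    ring_nf
  have hcancel (s : ℝ) (u : ℂ) : I / (s + c * I) * u * (I * (s + c * I)) = -u := by
    rw [mul_right_comm, mul_comm I (s + c * I : ℂ), ← mul_assoc,
      div_mul_cancel₀ I (add_mul_I_ne_zero hc s)]
    linear_combination u * I_sq
  have hquot := continuous_div_add_mul_I hc
  have hk : Continuous fun s : ℝ => I / (s + c * I) * exp (I * ((s + c * I) ^ 3 / 3)) := by
    fun_prop
  have hh : Continuous fun s : ℝ => I * (s + c * I) := by fun_prop
  have hderiv := (hasDerivAt_integral_mul_exp_sub (w := w) (q := 0) one_pos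
    hk.aestronglyMeasurable hh.aestronglyMeasurable (μ := volume)
    (by simpa only [Pi.zero_apply, sub_zero, mul_assoc, hwave] using integrable_div_mul_wave hc w)
    ((integrable_norm_wave_mul_exp_norm hc w).congr (ae_of_all _ fun s => ?_))).const_mul
    (2 * Real.pi : ℂ)⁻¹
  · simp only [Pi.zero_apply, sub_zero, hcancel, mul_assoc (I / _), hwave, neg_mul, integral_neg,
      integral_wave hc] at hderiv
    exact hderiv.congr_deriv (by field_simp)
  · beta_reduce
    rw [hcancel, norm_neg, one_mul, Real.exp_add, ← norm_exp, ← mul_assoc, ← norm_mul, hwave,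
      norm_mul I, norm_I, one_mul]

end Line

section Primitive

open Complex Topology

/-- The antiderivative of `rayIntegral` vanishing at `0`. -/
noncomputable def rayPrimitive (w : ℂ) : ℂ :=
  ∫ r in Ioi (0 : ℝ), weight r * ((exp (w * r) - 1) / r)

/-- The antiderivative of `entire` vanishing at `0`. -/
noncomputable def primitive (w : ℂ) : ℂ :=
  (2 * Real.pi * I)⁻¹ * (rayPrimitive (ω * w) - rayPrimitive (ω ^ 2 * w))

lemma hasDerivAt_rayPrimitive (w : ℂ) : HasDerivAt rayPrimitive (rayIntegral w) w := by
  have hw : w.re < max w.re 0 + 1 := (le_max_left _ _).trans_lt (lt_add_one _)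
  have hzero : (0 : ℂ).re ≤ max w.re 0 + 1 := (le_max_right _ _).trans (lt_add_one _).le
  have hderiv :=
    hasDerivAt_integral_Ioi_mul_exp_sub_exp_div hw hzero (integrableOn_weight_mul_exp _)
  simp only [zero_mul, exp_zero] at hderiv
  exact hderiv

lemma hasDerivAt_primitive (w : ℂ) : HasDerivAt primitive (entire w) w := by
  have hray (a : ℂ) : HasDerivAt (fun w => rayPrimitive (a * w)) (a * rayIntegral (a * w)) w :=
    ((hasDerivAt_rayPrimitive (a * w)).comp w (hasDerivAt_const_mul a)).congr_deriv (mul_comm _ _)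
  exact ((hray ω).sub (hray (ω ^ 2))).const_mul (2 * Real.pi * I)⁻¹

lemma primitive_zero : primitive 0 = 0 := by simp [primitive]

lemma primitive_add_primitive_omega_mul (w : ℂ) :
    primitive w + primitive (ω * w) + primitive (ω ^ 2 * w) = 0 := by
  have hω_sq : ω * (ω ^ 2 * w) = w := by linear_combination w * omega_pow_three
  have hω_cube : ω ^ 2 * (ω * w) = w := by linear_combination w * omega_pow_three
  have hω_four : ω ^ 2 * (ω ^ 2 * w) = ω * w := by linear_combination ω * w * omega_pow_three
  simp only [primitive, hω_sq, hω_cube, hω_four, ← mul_assoc ω ω, ← sq]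
  ring

lemma re_omega : ω.re = -1 / 2 := rfl

lemma re_omega_sq : (ω ^ 2).re = -1 / 2 := by rw [omega_sq]

lemma log_neg_omega : log (-ω) = -(Real.pi / 3) * I := by
  have hexp : exp (((-(Real.pi / 3) : ℝ) : ℂ) * I) = -ω := by
    apply Complex.ext <;> simp [exp_ofReal_mul_I_re, exp_ofReal_mul_I_im, ω, -ofReal_neg]
    norm_num
  rw [← hexp, log_exp] <;> simp <;> linarith [Real.pi_pos]

lemma log_neg_omega_sq : log (-ω ^ 2) = Real.pi / 3 * I := by
  have hexp : exp (((Real.pi / 3 : ℝ) : ℂ) * I) = -ω ^ 2 := by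
    rw [omega_sq]
    apply Complex.ext <;> simp [exp_ofReal_mul_I_re, exp_ofReal_mul_I_im, -ofReal_div]
    norm_num
  rw [← hexp, log_exp] <;> simp <;> linarith [Real.pi_pos]

lemma continuous_weight : Continuous weight := by
  unfold weight
  fun_prop

lemma norm_weight_le_one {r : ℝ} (hr : 0 ≤ r) : ‖weight r‖ ≤ 1 := by
  rw [weight, Complex.norm_of_nonneg (Real.exp_pos _).le, Real.exp_le_one_iff, neg_div]
  exact neg_nonpos.mpr (by positivity)

lemma tendsto_integral_weight_div_mul {f : ℝ → ℂ} (hf : IntegrableOn f (Ioi 0)) :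
    Tendsto (fun x : ℝ => ∫ v in Ioi (0 : ℝ), weight (v / x) * f v) atTop
      (𝓝 (∫ v in Ioi (0 : ℝ), f v)) := by
  refine tendsto_integral_filter_of_dominated_convergence (fun v => ‖f v‖)
    (.of_forall fun x => ?_) ?_ hf.norm (ae_of_all _ fun v => ?_)
  · exact (continuous_weight.comp (continuous_id.div_const x)).aestronglyMeasurable.mul
      hf.aestronglyMeasurable
  · filter_upwards [eventually_ge_atTop 0] with x hx
    refine ae_restrict_of_forall_mem measurableSet_Ioi fun v hv => ?_
    rw [norm_mul]
    exact mul_le_of_le_one_left (norm_nonneg _) (norm_weight_le_one (div_nonneg hv.out.le hx))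
  · have hweight := (continuous_weight.tendsto 0).comp (tendsto_id.const_div_atTop v)
    simpa [weight] using hweight.mul_const (f v)

lemma primitive_eq_integral_weight_div {x : ℝ} (hx : 0 < x) : primitive x = (2 * Real.pi * I)⁻¹ *
    ∫ v in Ioi (0 : ℝ), weight (v / x) * ((exp (ω * v) - exp (ω ^ 2 * v)) / v) := by
  have hint (w : ℂ) : IntegrableOn (fun r : ℝ => weight r * ((exp (w * r) - 1) / r)) (Ioi 0) := by
    simpa using integrableOn_Ioi_mul_exp_sub_exp_div (b := 0) (le_max_left w.re 0)
      (le_max_right w.re 0) (integrableOn_weight_mul_exp _)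
  rw [primitive, rayPrimitive, rayPrimitive, ← integral_sub (hint _) (hint _)]
  congr 1
  have hscale := integral_comp_mul_left_Ioi
    (fun v : ℝ => weight (v / x) * ((exp (ω * v) - exp (ω ^ 2 * v)) / v)) 0 hx
  rw [mul_zero, eq_inv_smul_iff₀ hx.ne', ← integral_smul] at hscale
  rw [← hscale]
  refine setIntegral_congr_fun measurableSet_Ioi fun r hr => ?_
  have hr : (r : ℂ) ≠ 0 := ofReal_ne_zero.mpr (ne_of_gt hr)
  have hx : (x : ℂ) ≠ 0 := ofReal_ne_zero.mpr hx.ne'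
  simp only [mul_div_cancel_left₀ r (ofReal_ne_zero.mp hx), real_smul]
  push_cast
  field_simp
  ring_nf

lemma tendsto_primitive_atTop : Tendsto (fun x : ℝ => primitive x) atTop (𝓝 (1 / 3)) := by
  have hint : IntegrableOn (fun v : ℝ => (exp (ω * v) - exp (ω ^ 2 * v)) / v) (Ioi 0) := by
    have hexp : IntegrableOn (fun r : ℝ => (1 : ℂ) * Real.exp (-1 / 2 * r)) (Ioi 0) := by
      simpa [IntegrableOn] using
        (integrableOn_exp_mul_Ioi (by norm_num : (-1 / 2 : ℝ) < 0) 0).ofReal (𝕜 := ℂ)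
    simpa only [one_mul] using
      integrableOn_Ioi_mul_exp_sub_exp_div re_omega.le re_omega_sq.le hexp
  have hfrullani : ∫ v in Ioi (0 : ℝ), (exp (ω * v) - exp (ω ^ 2 * v)) / v =
      2 * Real.pi * I / 3 := by
    rw [integral_Ioi_exp_sub_exp_div (by rw [re_omega]; norm_num) (by rw [re_omega_sq]; norm_num),
      log_neg_omega, log_neg_omega_sq]
    ring
  have hlim := (tendsto_integral_weight_div_mul hint).const_mul (2 * Real.pi * I)⁻¹
  rw [hfrullani, ← mul_div_assoc, inv_mul_cancel₀ two_pi_I_ne_zero] at hlim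
  refine hlim.congr' ?_
  filter_upwards [eventually_gt_atTop 0] with x hx
  exact (primitive_eq_integral_weight_div hx).symm

lemma tail_eq {c : ℝ} (hc : 0 < c) (w : ℂ) : tail c w = 1 / 3 - primitive w := by
  have hderiv (v : ℂ) : HasDerivAt (fun v => tail c v + primitive v) 0 v :=
    ((hasDerivAt_tail hc v).add (hasDerivAt_primitive v)).congr_deriv (neg_add_cancel _)
  have hconst (x : ℝ) : tail c x + primitive x = tail c w + primitive w :=
    is_const_of_deriv_eq_zero (fun v => (hderiv v).differentiableAt) (fun v => (hderiv v).deriv) x w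
  have hlim := (tendsto_tail_atTop hc).add tendsto_primitive_atTop
  simp only [hconst, zero_add] at hlim
  exact eq_sub_of_add_eq (tendsto_nhds_unique tendsto_const_nhds hlim)

end Primitive

section Integrals

open Topology

lemma hasDerivAt_re_primitive (x : ℝ) : HasDerivAt (fun x : ℝ => (primitive x).re) (Ai x) x := by
  rw [eq_re_entire]
  exact (hasDerivAt_primitive x).real_of_complex

lemma continuous : Continuous Ai := by
  have hderiv : deriv primitive = entire := funext fun w => (hasDerivAt_primitive w).deriv
  have hprim : Differentiable ℂ primitive := fun w => (hasDerivAt_primitive w).differentiableAt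
  have hentire : Continuous entire := hderiv ▸ (hprim.contDiff (n := 1)).continuous_deriv le_rfl
  exact (Complex.continuous_re.comp (hentire.comp Complex.continuous_ofReal)).congr fun x =>
    (eq_re_entire x).symm

lemma integral_eq_sub (a b : ℝ) : ∫ u in a..b, Ai u = (primitive b).re - (primitive a).re :=
  intervalIntegral.integral_eq_sub_of_hasDerivAt (fun x _ => hasDerivAt_re_primitive x)
    (continuous.intervalIntegrable a b)

lemma integrableOn_Ioi (a : ℝ) : IntegrableOn Ai (Ioi a) := by
  refine integrable_of_isBigO_exp_neg one_pos continuous.continuousOn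
    (.of_bound ((2 * Real.pi)⁻¹ * (√(Real.pi / 1) * Real.exp (1 / 3))) (.of_forall fun x => ?_))
  have hbound := (Complex.abs_re_le_norm _).trans (norm_entire_le one_pos (x : ℂ))
  rw [← eq_re_entire] at hbound
  refine hbound.trans_eq ?_
  simp [sub_eq_add_neg, Real.exp_add, mul_assoc]

lemma integral_Ioi_zero : ∫ u in Ioi (0 : ℝ), Ai u = 1 / 3 := by
  have hlim := (Complex.continuous_re.tendsto _).comp tendsto_primitive_atTop
  have htail := intervalIntegral_tendsto_integral_Ioi 0 (integrableOn_Ioi 0) tendsto_id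
  simp only [integral_eq_sub, Complex.ofReal_zero, primitive_zero, Complex.zero_re, sub_zero,
    id_eq] at htail
  exact (tendsto_nhds_unique htail hlim).trans (by norm_num)

end Integrals

section PositiveAxis

open Complex Topology

/-- The integral that remains when `tail` is taken over the line through the saddle point of
`wave x` and the exponential factor is removed; the parameter is `t = x ^ (-3 / 4)`. -/
noncomputable def saddleIntegral (t : ℝ) : ℂ :=
  ∫ v : ℝ, exp (-v ^ 2 + t * v ^ 3 / 3 * I) * (I / (I + t * v))

lemma one_le_norm_I_add (u : ℝ) : 1 ≤ ‖I + u‖ := by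
  simpa using im_le_norm (I + u)

lemma I_add_ne_zero (u : ℝ) : I + u ≠ 0 :=
  norm_pos_iff.mp (one_pos.trans_le (one_le_norm_I_add u))

lemma continuousAt_saddleIntegral (t : ℝ) : ContinuousAt saddleIntegral t := by
  have hne (t v : ℝ) : I + t * v ≠ 0 := by exact_mod_cast I_add_ne_zero (t * v)
  refine continuousAt_of_dominated (bound := fun v => Real.exp (-1 * v ^ 2))
    (.of_forall fun t => ?_) (.of_forall fun t => ae_of_all _ fun v => ?_)
    (integrable_exp_neg_mul_sq one_pos) (ae_of_all _ fun v => ?_)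
  · have hquot : Continuous fun v : ℝ => I / (I + t * v) :=
      continuous_const.div (by fun_prop) (hne t)
    exact Continuous.aestronglyMeasurable (by fun_prop)
  · have hre : (-v ^ 2 + t * v ^ 3 / 3 * I : ℂ).re = -1 * v ^ 2 := by
      have hsplit : (-v ^ 2 + t * v ^ 3 / 3 * I : ℂ) =
          (-1 * v ^ 2 : ℝ) + (t * v ^ 3 / 3 : ℝ) * I := by
        push_cast
        ring
      rw [hsplit, add_re, ofReal_re, re_ofReal_mul, I_re, mul_zero, add_zero]
    rw [norm_mul, norm_exp, hre, norm_div, norm_I, ← ofReal_mul]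
    exact mul_le_of_le_one_right (Real.exp_pos _).le
      (div_le_one_of_le₀ (one_le_norm_I_add _) (norm_nonneg _))
  · have hquot : Continuous fun t : ℝ => I / (I + t * v) :=
      continuous_const.div (by fun_prop) (hne · v)
    exact Continuous.continuousAt (by fun_prop)

lemma saddleIntegral_zero : saddleIntegral 0 = √Real.pi := by
  have hgauss := congrArg ((↑) : ℝ → ℂ) (integral_gaussian 1)
  rw [div_one, ← integral_complex_ofReal] at hgauss
  rw [← hgauss, saddleIntegral]
  congr 1 with v
  simp

lemma wave_saddle {q t : ℝ} (hqt : q ^ 3 * t = 1) (v : ℝ) :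
    wave (q ^ 4 : ℝ) (q ^ 2 * (I + t * v)) =
      Real.exp (-(2 / 3 * q ^ 6)) * exp (-v ^ 2 + t * v ^ 3 / 3 * I) := by
  have hqt : (q ^ 3 * t : ℂ) = 1 := by exact_mod_cast hqt
  rw [wave, ofReal_exp, ← exp_add]
  congr 1
  push_cast
  linear_combination q ^ 6 * ((I ^ 2 - 1) / 3 + I * t * v + t ^ 2 * v ^ 2 + 1) * I_sq +
    (q ^ 3 * t + 1) * (I * t * v ^ 3 / 3 - v ^ 2) * hqt

lemma tail_eq_saddleIntegral {q t : ℝ} (hq : 0 < q) (hqt : q ^ 3 * t = 1) :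
    tail (q ^ 2) (q ^ 4 : ℝ) =
      ((2 * Real.pi)⁻¹ * Real.exp (-(2 / 3 * q ^ 6)) * t : ℝ) * saddleIntegral t := by
  have hqc : (q : ℂ) ≠ 0 := ofReal_ne_zero.mpr hq.ne'
  have hqt' : (q ^ 3 * t : ℂ) = 1 := by exact_mod_cast hqt
  have hline (v : ℝ) : ((q⁻¹ * v : ℝ) + (q ^ 2 : ℝ) * I : ℂ) = q ^ 2 * (I + t * v) := by
    push_cast
    field_simp
    linear_combination -v * hqt'
  have hscale := Measure.integral_comp_mul_left (fun s : ℝ =>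
    I / (s + (q ^ 2 : ℝ) * I) * wave (q ^ 4 : ℝ) (s + (q ^ 2 : ℝ) * I)) q⁻¹
  rw [inv_inv, abs_of_pos hq, real_smul] at hscale
  have hintegrand (v : ℝ) : I / (q ^ 2 * (I + t * v)) *
      (Real.exp (-(2 / 3 * q ^ 6)) * exp (-v ^ 2 + t * v ^ 3 / 3 * I)) =
      q * (Real.exp (-(2 / 3 * q ^ 6)) * t) *
        (exp (-v ^ 2 + t * v ^ 3 / 3 * I) * (I / (I + t * v))) := by
    have := I_add_ne_zero (t * v)
    push_cast at this
    field_simp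
    linear_combination -hqt'
  simp only [hline, wave_saddle hqt, hintegrand, integral_const_mul] at hscale
  rw [mul_assoc (q : ℂ), mul_right_inj' hqc] at hscale
  rw [tail, ← hscale, saddleIntegral]
  push_cast
  ring

lemma re_tail {c : ℝ} (hc : 0 < c) (x : ℝ) : (tail c x).re = 1 / 3 - ∫ u in (0 : ℝ)..x, Ai u := by
  rw [tail_eq hc, integral_eq_sub, ofReal_zero, primitive_zero]
  simp

lemma one_third_sub_integral_eq {q : ℝ} (hq : 0 < q) :
    1 / 3 - ∫ u in (0 : ℝ)..q ^ 4, Ai u =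
      (2 * Real.pi)⁻¹ * Real.exp (-(2 / 3 * q ^ 6)) * (q ^ 3)⁻¹ *
        (saddleIntegral (q ^ 3)⁻¹).re := by
  rw [← re_tail (pow_pos hq 2), tail_eq_saddleIntegral hq (mul_inv_cancel₀ (pow_pos hq 3).ne'),
    re_ofReal_mul]

lemma tendsto_one_third_sub_integral :
    Tendsto (fun q : ℝ => 2 * √Real.pi * q ^ 3 * Real.exp (2 / 3 * q ^ 6) *
      (1 / 3 - ∫ u in (0 : ℝ)..q ^ 4, Ai u)) atTop (𝓝 1) := by
  have hinv : Tendsto (fun q : ℝ => (q ^ 3)⁻¹) atTop (𝓝 0) :=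
    tendsto_inv_atTop_zero.comp (tendsto_pow_atTop three_ne_zero)
  have hsaddle : Tendsto (fun q : ℝ => (saddleIntegral (q ^ 3)⁻¹).re) atTop (𝓝 √Real.pi) := by
    have hlim := (continuousAt_saddleIntegral 0).tendsto
    rw [saddleIntegral_zero] at hlim
    exact (continuous_re.tendsto _).comp (hlim.comp hinv)
  have hpi : √Real.pi ≠ 0 := (Real.sqrt_pos.mpr Real.pi_pos).ne'
  have hlim := hsaddle.const_mul (√Real.pi)⁻¹
  rw [inv_mul_cancel₀ hpi] at hlim
  refine hlim.congr' ?_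
  filter_upwards [eventually_gt_atTop 0] with q hq
  rw [one_third_sub_integral_eq hq, Real.exp_neg]
  field_simp
  rw [Real.sq_sqrt Real.pi_pos.le]
  ring

end PositiveAxis

section NegativeAxis

open Complex

variable {x : ℝ}

lemma norm_one_third_sub_primitive_le {w : ℂ} (hx : 0 < x) (hre : w.re = x / 2)
    (him : w.im ^ 2 = 3 / 4 * x ^ 2) :
    ‖1 / 3 - primitive w‖ ≤ (2 * √Real.pi)⁻¹ * (3 / 4 * x) ^ (-(3 : ℝ) / 4) := by
  set c := √(3 / 4 * x) with hc_def
  have hx' : 0 < 3 / 4 * x := by positivity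
  have hc : 0 < c := Real.sqrt_pos.mpr hx'
  have hc_sq : c ^ 2 = 3 / 4 * x := Real.sq_sqrt hx'.le
  have hexponent : c ^ 3 / 3 - c * w.re + w.im ^ 2 / (4 * c) = 0 := by
    have hx_eq : x = 4 / 3 * c ^ 2 := by linarith
    rw [hre, him, hx_eq]
    field_simp
    ring
  have hpow : c⁻¹ * (√c)⁻¹ = (3 / 4 * x) ^ (-(3 : ℝ) / 4) := by
    rw [hc_def, Real.sqrt_eq_rpow, Real.sqrt_eq_rpow, ← Real.rpow_mul hx'.le, ← mul_inv,
      ← Real.rpow_add hx', ← Real.rpow_neg hx'.le]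
    norm_num
  have hbound := norm_tail_le hc w
  rw [tail_eq hc, hexponent, Real.exp_zero, mul_one, Real.sqrt_div Real.pi_pos.le] at hbound
  refine hbound.trans_eq ?_
  rw [← hpow]
  field_simp
  rw [Real.sq_sqrt Real.pi_pos.le]

lemma abs_integral_neg_sub_two_thirds_le (hx : 0 < x) :
    |(∫ u in (-x)..0, Ai u) - 2 / 3| ≤ (√Real.pi)⁻¹ * (3 / 4 * x) ^ (-(3 : ℝ) / 4) := by
  have hleft : ‖1 / 3 - primitive (ω * (-x : ℝ))‖ ≤ _ :=
    norm_one_third_sub_primitive_le hx (by simp [ω]; ring) (by simp [ω]; ring_nf; norm_num; ring)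
  have hright : ‖1 / 3 - primitive (ω ^ 2 * (-x : ℝ))‖ ≤ _ :=
    norm_one_third_sub_primitive_le hx (by simp [omega_sq]; ring)
      (by simp [omega_sq]; ring_nf; norm_num; ring)
  have hsum : (∫ u in (-x)..0, Ai u) - 2 / 3 = -((1 / 3 - primitive (ω * (-x : ℝ))) +
      (1 / 3 - primitive (ω ^ 2 * (-x : ℝ)))).re := by
    have hcycle := congrArg re (primitive_add_primitive_omega_mul (-x : ℝ))
    have hthird : (1 / 3 : ℂ).re = 1 / 3 := by norm_num
    rw [integral_eq_sub, ofReal_zero, primitive_zero]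
    simp only [add_re, sub_re, zero_re, hthird] at hcycle ⊢
    linarith
  rw [hsum, abs_neg]
  refine (abs_re_le_norm _).trans ((norm_add_le_of_le hleft hright).trans_eq ?_)
  field_simp
  norm_num

lemma one_sub_integral_Ioi (x : ℝ) :
    1 - ∫ u in Ioi x, Ai u = -((∫ u in x..0, Ai u) - 2 / 3) := by
  rw [← intervalIntegral.integral_interval_add_Ioi (integrableOn_Ioi x) (integrableOn_Ioi 0),
    integral_Ioi_zero]
  ring

end NegativeAxis

end Ai

/-- asymptotics of integrals of the Airy function. -/
theorem airy_integral_asymptotics :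
    (Filter.Tendsto
      (fun x : ℝ => 2 * Real.sqrt Real.pi * x ^ ((3:ℝ)/4) * Real.exp ((2/3) * x ^ ((3:ℝ)/2)) *
        (1/3 - ∫ u in (0:ℝ)..x, Ai u))
      Filter.atTop (nhds 1)) ∧
    (∃ C : ℝ, 0 < C ∧ ∀ x : ℝ, 1 ≤ x →
      |(∫ u in (-x)..(0:ℝ), Ai u) - 2/3| ≤ C * x ^ (-(3:ℝ)/4)) ∧
    ((∀ a : ℝ, IntegrableOn Ai (Set.Ioi a)) ∧
      ∃ C : ℝ, 0 < C ∧ ∀ x : ℝ, 1 ≤ x →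
        |1 - ∫ u in Set.Ioi (-x), Ai u| ≤ C * x ^ (-(3:ℝ)/4)) := by
  let C : ℝ := (√Real.pi)⁻¹ * (3 / 4) ^ (-(3 : ℝ) / 4)
  have hC : 0 < C := by positivity
  have hbound (x : ℝ) (hx : 1 ≤ x) :
      |(∫ u in (-x)..(0 : ℝ), Ai u) - 2 / 3| ≤ C * x ^ (-(3 : ℝ) / 4) := by
    have hx₀ : 0 < x := one_pos.trans_le hx
    rw [mul_assoc, ← Real.mul_rpow (by norm_num) hx₀.le]
    exact Ai.abs_integral_neg_sub_two_thirds_le hx₀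
  refine ⟨?_, ⟨C, hC, hbound⟩, Ai.integrableOn_Ioi, C, hC, fun x hx => ?_⟩
  · refine (Ai.tendsto_one_third_sub_integral.comp
      (tendsto_rpow_atTop (by norm_num : (0 : ℝ) < 1 / 4))).congr' ?_
    filter_upwards [eventually_ge_atTop 0] with x hx
    have hpow (n : ℕ) : (x ^ ((1 : ℝ) / 4)) ^ n = x ^ ((n : ℝ) / 4) := by
      rw [← Real.rpow_natCast, ← Real.rpow_mul hx, one_div_mul_eq_div]
    norm_num [hpow]
  · rw [Ai.one_sub_integral_Ioi, abs_neg]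
    exact hbound x hx
end

section
/- Let ρ(x) = Ai'(x)² − x·Ai(x)². There is C > 0 such that for every x ≥ 1: ρ(x) ≤ C·e^{−(4/3)·x^{3/2}}, and |ρ(−x) − √x/π| ≤ C·x^{−1}. -/
open MeasureTheory Filter Set

/-!
Write `Ai(x)` as an integral of `exp(i(z³/3 + xz))`. The primitive of this entire function that
vanishes at the origin is purely imaginary on the imaginary axis, so the real half-line may be
replaced by any ray from the imaginary axis into the sector `0 ≤ arg z ≤ π/4`.

For `x = a²` take the horizontal ray through the saddle point `ia`. There the integrand has modulus
`exp(-2a³/3 - au²)`, which bounds `Ai`; in `Ai' + a Ai` the factor `iz` of `Ai'` is replaced by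
`iu`, which gains a power of `a` and absorbs the factor `2a` in
`ρ = (Ai' + a Ai)² - 2a Ai (Ai' + a Ai)`.

For `x = -b⁴` take the ray in the direction `ω = e^{iπ/4}` through the saddle point `b²`. With
`z = b² + (ω/b)v` the phase becomes `-2ib⁶/3 - v² - cv³/3`, where `c = ω/b³`, and a Taylor expansion
in `c` reduces everything to Gaussian moments. If `P₀`, `P₁` are the amplitudes of the terms of
order `0` and `1` in `z - b²`, then `π Ai = re P₀` and `π Ai' = -(b² im P₀ + im P₁)`, so that
`π²ρ = b⁴|P₀|² + 2b² im P₀ im P₁ + (im P₁)²`. Here `b²|P₀|² = π + O(b⁻⁶)` does not oscillate, and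
`P₁` is small because the odd Gaussian moments vanish.
-/

section AiryAsymptotics

open Asymptotics
open Complex (I)
open scoped Real Topology

/-- The integrand `e^{i(z³/3 + xz)}` of the Airy integral, at complex `z`, differentiated `k` times
with respect to `x`. -/
noncomputable def airyIntegrand (k : ℕ) (x : ℝ) (z : ℂ) : ℂ :=
  (I * z) ^ k * Complex.exp (I * (z ^ 3 / 3 + x * z))

lemma differentiable_airyIntegrand (k : ℕ) (x : ℝ) : Differentiable ℂ (airyIntegrand k x) := by
  unfold airyIntegrand
  fun_prop

@[fun_prop]
lemma continuous_airyIntegrand (k : ℕ) (x : ℝ) : Continuous (airyIntegrand k x) :=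
  (differentiable_airyIntegrand k x).continuous

lemma norm_airyIntegrand (k : ℕ) (x s t : ℝ) :
    ‖airyIntegrand k x (s + t * I)‖ =
      ‖(s + t * I : ℂ)‖ ^ k * Real.exp (t ^ 3 / 3 - s ^ 2 * t - x * t) := by
  rw [airyIntegrand, norm_mul, norm_pow, norm_mul, Complex.norm_I, one_mul, Complex.norm_exp]
  congr 2
  simp only [pow_succ, pow_zero, one_mul, Complex.mul_re, Complex.mul_im, Complex.add_re,
    Complex.add_im, Complex.div_ofNat_re, Complex.div_ofNat_im, Complex.ofReal_re,
    Complex.ofReal_im, Complex.I_re, Complex.I_im]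
  ring

lemma airyIntegrand_ofReal (x t : ℝ) :
    airyIntegrand 0 x t = Complex.exp ((t ^ 3 / 3 + x * t : ℝ) * I) := by
  rw [airyIntegrand, pow_zero, one_mul]
  push_cast
  ring_nf

lemma airyIntegrand_I_mul_ofReal (k : ℕ) (x y : ℝ) :
    airyIntegrand k x (I * y) = ((-y) ^ k * Real.exp (y ^ 3 / 3 - x * y) : ℝ) := by
  unfold airyIntegrand
  push_cast
  congr 2
  · linear_combination (y : ℂ) * Complex.I_sq
  · linear_combination ((y : ℂ) ^ 3 / 3 * (I ^ 2 - 1) + x * y) * Complex.I_sq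

lemma exists_primitive_airyIntegrand (k : ℕ) (x : ℝ) :
    ∃ G : ℂ → ℂ, G 0 = 0 ∧ ∀ z, HasDerivAt G (airyIntegrand k x z) z := by
  obtain ⟨G, hG0, hG⟩ := (differentiable_airyIntegrand k x).isExactOn_univ.with_val_at 0 0
  exact ⟨G, hG0, fun z => hG z (mem_univ _)⟩

/-- The primitive of `airyIntegrand k x` that vanishes at the origin. -/
noncomputable def airyPrimitive (k : ℕ) (x : ℝ) : ℂ → ℂ :=
  (exists_primitive_airyIntegrand k x).choose

lemma airyPrimitive_zero (k : ℕ) (x : ℝ) : airyPrimitive k x 0 = 0 :=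
  (exists_primitive_airyIntegrand k x).choose_spec.1

lemma hasDerivAt_airyPrimitive (k : ℕ) (x : ℝ) (z : ℂ) :
    HasDerivAt (airyPrimitive k x) (airyIntegrand k x z) z :=
  (exists_primitive_airyIntegrand k x).choose_spec.2 z

lemma integral_airyIntegrand_segment (k : ℕ) (x : ℝ) (p q : ℂ) (a b : ℝ) :
    ∫ u in a..b, q * airyIntegrand k x (p + q * u) =
      airyPrimitive k x (p + q * b) - airyPrimitive k x (p + q * a) := by
  refine intervalIntegral.integral_eq_sub_of_hasDerivAt
    (f := fun u : ℝ => airyPrimitive k x (p + q * u)) (fun u _ => ?_)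
    (Continuous.intervalIntegrable (by fun_prop) _ _)
  have hline : HasDerivAt (fun u : ℝ => p + q * (u : ℂ)) q u := by
    simpa using ((Complex.ofRealCLM.hasDerivAt (x := u)).const_mul q).const_add p
  rw [mul_comm]
  exact (hasDerivAt_airyPrimitive k x (p + q * u)).comp u hline

lemma re_airyPrimitive_I_mul_ofReal (k : ℕ) (x y : ℝ) : (airyPrimitive k x (I * y)).re = 0 := by
  have h := integral_airyIntegrand_segment k x 0 I 0 y
  simp only [zero_add, airyIntegrand_I_mul_ofReal, intervalIntegral.integral_const_mul,
    intervalIntegral.integral_ofReal, Complex.ofReal_zero, mul_zero, airyPrimitive_zero,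
    sub_zero] at h
  rw [← h, Complex.re_mul_ofReal, Complex.I_re, zero_mul]

lemma re_airyPrimitive_ofReal (x b : ℝ) :
    (airyPrimitive 0 x b).re = ∫ t in (0 : ℝ)..b, Real.cos (t ^ 3 / 3 + x * t) := by
  have h := integral_airyIntegrand_segment 0 x 0 1 0 b
  simp only [zero_add, one_mul, Complex.ofReal_zero, airyPrimitive_zero, sub_zero] at h
  rw [← h, ← Complex.reCLM_apply, ← Complex.reCLM.intervalIntegral_comp_comm
    (Continuous.intervalIntegrable (by fun_prop) _ _)]
  simp only [airyIntegrand_ofReal, Complex.reCLM_apply, Complex.exp_ofReal_mul_I_re]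

lemma integral_exp_neg_mul_le {a : ℝ} (ha : 0 < a) (t : ℝ) :
    ∫ τ in (0 : ℝ)..t, Real.exp (-a * τ) ≤ 1 / a := by
  rw [intervalIntegral.integral_comp_mul_left Real.exp (neg_ne_zero.2 ha.ne'), integral_exp,
    mul_zero, Real.exp_zero, smul_eq_mul, inv_neg, neg_mul, ← mul_neg, neg_sub, ← one_div]
  exact mul_le_of_le_one_right (by positivity) (by linarith [Real.exp_pos (-a * t)])

lemma norm_airyIntegrand_vertical_le {x s t : ℝ} (k : ℕ) (hx : 3 * |x| ≤ s ^ 2)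
    (ht : 0 ≤ t) (hts : t ≤ s) :
    ‖airyIntegrand k x (s + t * I)‖ ≤ (2 * s) ^ k * Real.exp (-(s ^ 2 / 3) * t) := by
  have hz : ‖(s + t * I : ℂ)‖ ≤ 2 * s := by
    refine (norm_add_le _ _).trans ?_
    rw [norm_mul, Complex.norm_I, mul_one, Complex.norm_of_nonneg ht,
      Complex.norm_of_nonneg (ht.trans hts)]
    linarith
  have ht3 : t ^ 3 ≤ s ^ 2 * t := by
    rw [pow_succ]
    gcongr
  have hxt : -x * t ≤ s ^ 2 / 3 * t := by
    gcongr
    linarith [neg_abs_le x]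
  have hs : 0 ≤ s := ht.trans hts
  rw [norm_airyIntegrand]
  gcongr
  linarith

lemma norm_airyPrimitive_vertical_sub_le {x s t : ℝ} (k : ℕ) (hs : 0 < s) (hx : 3 * |x| ≤ s ^ 2)
    (ht : 0 ≤ t) (hts : t ≤ s) :
    ‖airyPrimitive k x (s + t * I) - airyPrimitive k x s‖ ≤ (2 * s) ^ k * (3 / s ^ 2) := by
  have h := integral_airyIntegrand_segment k x s I 0 t
  simp only [mul_comm I, Complex.ofReal_zero, zero_mul, add_zero] at h
  rw [← h]
  calc ‖∫ τ in (0 : ℝ)..t, airyIntegrand k x (s + τ * I) * I‖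
      ≤ ∫ τ in (0 : ℝ)..t, (2 * s) ^ k * Real.exp (-(s ^ 2 / 3) * τ) := by
        refine intervalIntegral.norm_integral_le_of_norm_le ht
          (Eventually.of_forall fun τ hτ => ?_)
          (Continuous.intervalIntegrable (by fun_prop) _ _)
        rw [norm_mul, Complex.norm_I, mul_one]
        exact norm_airyIntegrand_vertical_le k hx hτ.1.le (hτ.2.trans hts)
    _ ≤ (2 * s) ^ k * (1 / (s ^ 2 / 3)) := by
        rw [intervalIntegral.integral_const_mul]
        gcongr
        exact integral_exp_neg_mul_le (by positivity) t
    _ = (2 * s) ^ k * (3 / s ^ 2) := by rw [one_div_div]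

lemma tendsto_airyPrimitive_vertical_sub {k : ℕ} (hk : k < 2) (x : ℝ) {t : ℝ → ℝ}
    (ht : ∀ᶠ s in atTop, 0 ≤ t s ∧ t s ≤ s) :
    Tendsto (fun s : ℝ => airyPrimitive k x (s + t s * I) - airyPrimitive k x s) atTop (𝓝 0) := by
  have hbound : Tendsto (fun s : ℝ => (2 * s) ^ k * (3 / s ^ 2)) atTop (𝓝 0) := by
    have h : Tendsto (fun s : ℝ => 2 ^ k * 3 * (s ^ k / s ^ 2)) atTop (𝓝 (2 ^ k * 3 * 0)) :=
      (tendsto_pow_div_pow_atTop_zero hk).const_mul _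
    rw [mul_zero] at h
    exact h.congr fun s => by ring
  refine squeeze_zero_norm' ?_ hbound
  filter_upwards [ht, eventually_gt_atTop 0,
    (tendsto_pow_atTop two_ne_zero).eventually_ge_atTop (3 * |x|)] with s hts hs hx
  exact norm_airyPrimitive_vertical_sub_le k hs hx hts.1 hts.2

theorem tendsto_re_airyPrimitive {k : ℕ} (hk : k < 2) {x u₀ : ℝ} {p q : ℂ}
    (hstart : (p + q * u₀).re = 0) (hq : 0 < q.re)
    (hint : IntegrableOn (fun u : ℝ => q * airyIntegrand k x (p + q * u)) (Ioi u₀))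
    (hsector : ∀ᶠ u : ℝ in atTop, 0 ≤ (p + q * u).im ∧ (p + q * u).im ≤ (p + q * u).re) :
    Tendsto (fun s : ℝ => (airyPrimitive k x s).re) atTop
      (𝓝 (∫ u in Ioi u₀, q * airyIntegrand k x (p + q * u)).re) := by
  set u : ℝ → ℝ := fun s => (s - p.re) / q.re with hu_def
  have hu : Tendsto u atTop atTop :=
    (tendsto_atTop_add_const_right _ _ tendsto_id).atTop_div_const hq
  have hre (s : ℝ) : (p + q * u s).re = s := by
    rw [Complex.add_re, Complex.re_mul_ofReal, hu_def, mul_div_cancel₀ _ hq.ne',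
      add_sub_cancel]
  have hray : Tendsto (fun s => (airyPrimitive k x (p + q * u s)).re) atTop
      (𝓝 (∫ u in Ioi u₀, q * airyIntegrand k x (p + q * u)).re) := by
    have h := (Complex.continuous_re.tendsto _).comp
      (intervalIntegral_tendsto_integral_Ioi u₀ hint hu)
    have hstart' : p + q * u₀ = I * (p + q * u₀).im := by
      apply Complex.ext <;> simp [hstart]
    refine h.congr fun s => ?_
    rw [Function.comp_apply, integral_airyIntegrand_segment, Complex.sub_re, hstart',
      re_airyPrimitive_I_mul_ofReal, sub_zero]
  have hvert := (Complex.continuous_re.tendsto _).comp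
    (tendsto_airyPrimitive_vertical_sub hk x (t := fun s => (p + q * u s).im)
      ((hu.eventually hsector).mono fun s hs => ⟨hs.1, hs.2.trans_eq (hre s)⟩))
  have hz (s : ℝ) : (s + (p + q * u s).im * I : ℂ) = p + q * u s :=
    Complex.ext (by simpa using (hre s).symm) (by simp)
  have h := hray.sub hvert
  rw [Complex.zero_re, sub_zero] at h
  refine h.congr fun s => ?_
  rw [Function.comp_apply, hz, Complex.sub_re, sub_sub_cancel]

lemma integrable_abs_pow_mul_exp_neg_mul_sq (n : ℕ) {b : ℝ} (hb : 0 < b) :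
    Integrable fun u : ℝ => |u| ^ n * Real.exp (-b * u ^ 2) := by
  have hn : (-1 : ℝ) < n := neg_one_lt_zero.trans_le n.cast_nonneg
  refine (integrable_rpow_mul_exp_neg_mul_sq hb hn).norm.congr (Eventually.of_forall fun u => ?_)
  simp only [Real.rpow_natCast, norm_mul, norm_pow, Real.norm_eq_abs, Real.abs_exp]

/-- The integral of `airyIntegrand k x` along the horizontal half-line `{u + ic | u > 0}`. -/
noncomputable def airyLineIntegral (k : ℕ) (x c : ℝ) : ℂ :=
  ∫ u in Ioi (0 : ℝ), airyIntegrand k x (u + c * I)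

lemma norm_airyIntegrand_horizontal_le (k : ℕ) (x : ℝ) {c : ℝ} (hc : 0 < c) (u : ℝ) :
    ‖airyIntegrand k x (u + c * I)‖ ≤ Real.exp (c ^ 3 / 3 - x * c) * (2 ^ (k - 1) *
      (|u| ^ k * Real.exp (-c * u ^ 2) + c ^ k * (|u| ^ 0 * Real.exp (-c * u ^ 2)))) := by
  have hz : ‖(u + c * I : ℂ)‖ ≤ |u| + c := by
    refine (norm_add_le _ _).trans_eq ?_
    rw [norm_mul, Complex.norm_I, mul_one, Complex.norm_real, Complex.norm_of_nonneg hc.le,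
      Real.norm_eq_abs]
  have hexp : Real.exp (c ^ 3 / 3 - u ^ 2 * c - x * c) =
      Real.exp (c ^ 3 / 3 - x * c) * Real.exp (-c * u ^ 2) := by
    rw [← Real.exp_add]
    ring_nf
  rw [norm_airyIntegrand, hexp]
  calc ‖(u + c * I : ℂ)‖ ^ k * (Real.exp (c ^ 3 / 3 - x * c) * Real.exp (-c * u ^ 2))
      ≤ (2 ^ (k - 1) * (|u| ^ k + c ^ k)) *
          (Real.exp (c ^ 3 / 3 - x * c) * Real.exp (-c * u ^ 2)) := by
        gcongr
        exact (pow_le_pow_left₀ (norm_nonneg _) hz k).trans (add_pow_le (abs_nonneg u) hc.le k)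
    _ = _ := by ring

lemma integrable_horizontal_bound (k : ℕ) {c : ℝ} (hc : 0 < c) (A : ℝ) :
    Integrable fun u : ℝ => A * (2 ^ (k - 1) *
      (|u| ^ k * Real.exp (-c * u ^ 2) + c ^ k * (|u| ^ 0 * Real.exp (-c * u ^ 2)))) :=
  (((integrable_abs_pow_mul_exp_neg_mul_sq k hc).add
    ((integrable_abs_pow_mul_exp_neg_mul_sq 0 hc).const_mul _)).const_mul _).const_mul _

lemma integrable_airyIntegrand_horizontal (k : ℕ) (x : ℝ) {c : ℝ} (hc : 0 < c) :
    Integrable fun u : ℝ => airyIntegrand k x (u + c * I) :=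
  (integrable_horizontal_bound k hc _).mono' (Continuous.aestronglyMeasurable (by fun_prop))
    (Eventually.of_forall (norm_airyIntegrand_horizontal_le k x hc))

lemma hasDerivAt_airyIntegrand_parameter (k : ℕ) (z : ℂ) (x : ℝ) :
    HasDerivAt (fun y : ℝ => airyIntegrand k y z) (airyIntegrand (k + 1) x z) x := by
  have h := ((((Complex.ofRealCLM.hasDerivAt (x := x)).mul_const z).const_add
    (z ^ 3 / 3)).const_mul I).cexp.const_mul ((I * z) ^ k)
  convert! h using 1
  simp only [airyIntegrand, Complex.ofRealCLM_apply, Complex.ofReal_one]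
  ring

lemma hasDerivAt_airyLineIntegral (k : ℕ) {c : ℝ} (hc : 0 < c) (x : ℝ) :
    HasDerivAt (fun y => airyLineIntegral k y c) (airyLineIntegral (k + 1) x c) x := by
  unfold airyLineIntegral
  refine (hasDerivAt_integral_of_dominated_loc_of_deriv_le
    (F := fun y (u : ℝ) => airyIntegrand k y (u + c * I))
    (F' := fun y u => airyIntegrand (k + 1) y (u + c * I)) (Metric.ball_mem_nhds x one_pos)
    (Eventually.of_forall fun y => Continuous.aestronglyMeasurable (by fun_prop))
    (integrable_airyIntegrand_horizontal k x hc).integrableOn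
    (Continuous.aestronglyMeasurable (by fun_prop))
    (Eventually.of_forall fun u y hy => ?_)
    (integrable_horizontal_bound (k + 1) hc
      (Real.exp (c ^ 3 / 3 - (x - 1) * c))).integrableOn
    (Eventually.of_forall fun u y _ => hasDerivAt_airyIntegrand_parameter k _ y)).2
  have hxy : x - 1 ≤ y := by
    rw [Metric.mem_ball, Real.dist_eq, abs_lt] at hy
    linarith
  refine (norm_airyIntegrand_horizontal_le (k + 1) y hc u).trans ?_
  gcongr

lemma tendsto_re_airyPrimitive_airyLineIntegral {k : ℕ} (hk : k < 2) (x : ℝ) {c : ℝ}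
    (hc : 0 < c) :
    Tendsto (fun s : ℝ => (airyPrimitive k x s).re) atTop (𝓝 (airyLineIntegral k x c).re) := by
  have hline (u : ℝ) : 1 * airyIntegrand k x (c * I + 1 * u) = airyIntegrand k x (u + c * I) := by
    rw [one_mul, one_mul, add_comm]
  have h := tendsto_re_airyPrimitive hk (x := x) (u₀ := 0) (p := c * I) (q := 1)
    (by simp) (by simp)
    (by simpa only [hline] using (integrable_airyIntegrand_horizontal k x hc).integrableOn)
    (by filter_upwards [eventually_ge_atTop c] with u hu using by simp [hu, hc.le])
  simpa only [hline, airyLineIntegral] using h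

lemma Ai_eq_of_tendsto {x L : ℝ}
    (h : Tendsto (fun s : ℝ => (airyPrimitive 0 x s).re) atTop (𝓝 L)) : Ai x = 1 / π * L := by
  simp only [re_airyPrimitive_ofReal] at h
  rw [Ai, h.limUnder_eq]

lemma iteratedDeriv_Ai_eq_airyLineIntegral (k : ℕ) (x : ℝ) {c : ℝ} (hc : 0 < c) :
    iteratedDeriv k Ai x = 1 / π * (airyLineIntegral k x c).re := by
  induction k generalizing x with
  | zero =>
    exact Ai_eq_of_tendsto (tendsto_re_airyPrimitive_airyLineIntegral two_pos x hc)
  | succ k ih =>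
    rw [iteratedDeriv_succ, funext ih]
    exact ((Complex.reCLM.hasFDerivAt.comp_hasDerivAt x
      (hasDerivAt_airyLineIntegral k hc x)).const_mul (1 / π)).deriv

theorem iteratedDeriv_Ai_eq_ray_integral {k : ℕ} (hk : k < 2) {x u₀ : ℝ} {p q : ℂ}
    (hstart : (p + q * u₀).re = 0) (hq : 0 < q.re)
    (hint : IntegrableOn (fun u : ℝ => q * airyIntegrand k x (p + q * u)) (Ioi u₀))
    (hsector : ∀ᶠ u : ℝ in atTop, 0 ≤ (p + q * u).im ∧ (p + q * u).im ≤ (p + q * u).re) :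
    iteratedDeriv k Ai x = 1 / π * (∫ u in Ioi u₀, q * airyIntegrand k x (p + q * u)).re := by
  rw [iteratedDeriv_Ai_eq_airyLineIntegral k x one_pos, tendsto_nhds_unique
    (tendsto_re_airyPrimitive_airyLineIntegral hk x one_pos)
    (tendsto_re_airyPrimitive hk hstart hq hint hsector)]

lemma norm_airyIntegrand_horizontal_saddle (a u : ℝ) :
    ‖airyIntegrand 0 (a ^ 2) (u + a * I)‖ =
      Real.exp (-(2 / 3) * a ^ 3) * Real.exp (-a * u ^ 2) := by
  rw [norm_airyIntegrand, pow_zero, one_mul, ← Real.exp_add]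
  ring_nf

lemma norm_integral_pow_mul_airyIntegrand_saddle_le (n : ℕ) {a : ℝ} (ha : 0 < a) :
    ‖∫ u in Ioi (0 : ℝ), (u : ℂ) ^ n * airyIntegrand 0 (a ^ 2) (u + a * I)‖ ≤
      Real.exp (-(2 / 3) * a ^ 3) * ∫ u in Ioi (0 : ℝ), u ^ n * Real.exp (-a * u ^ 2) := by
  have hint : IntegrableOn (fun u : ℝ => u ^ n * Real.exp (-a * u ^ 2)) (Ioi 0) :=
    (integrable_abs_pow_mul_exp_neg_mul_sq n ha).integrableOn.congr_fun
      (fun u hu => by simp only [abs_of_pos (mem_Ioi.1 hu)]) measurableSet_Ioi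
  rw [← integral_const_mul]
  refine norm_integral_le_of_norm_le (hint.const_mul _)
    ((ae_restrict_iff' measurableSet_Ioi).2 (Eventually.of_forall fun u hu => le_of_eq ?_))
  rw [norm_mul, norm_airyIntegrand_horizontal_saddle, norm_pow,
    Complex.norm_of_nonneg (mem_Ioi.1 hu).le]
  ring

lemma integral_Ioi_mul_exp_neg_mul_sq {a : ℝ} (ha : 0 < a) :
    ∫ u in Ioi (0 : ℝ), u * Real.exp (-a * u ^ 2) = (2 * a)⁻¹ := by
  have h := integral_mul_cexp_neg_mul_sq (b := a) (by simpa using ha)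
  rw [← Complex.ofReal_inj, ← integral_complex_ofReal]
  push_cast
  exact h

lemma abs_Ai_sq_le {a : ℝ} (ha : 0 < a) :
    |Ai (a ^ 2)| ≤ Real.exp (-(2 / 3) * a ^ 3) * (√(π / a) / (2 * π)) := by
  have h := norm_integral_pow_mul_airyIntegrand_saddle_le 0 ha
  simp only [pow_zero, one_mul, integral_gaussian_Ioi] at h
  rw [← iteratedDeriv_zero (f := Ai), iteratedDeriv_Ai_eq_airyLineIntegral 0 _ ha, abs_mul,
    abs_of_pos (by positivity)]
  calc 1 / π * |(airyLineIntegral 0 (a ^ 2) a).re|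
      ≤ 1 / π * (Real.exp (-(2 / 3) * a ^ 3) * (√(π / a) / 2)) := by
        gcongr
        exact (Complex.abs_re_le_norm _).trans h
    _ = Real.exp (-(2 / 3) * a ^ 3) * (√(π / a) / (2 * π)) := by ring

lemma airyLineIntegral_one_add_mul_zero (x : ℝ) {a : ℝ} (ha : 0 < a) :
    airyLineIntegral 1 x a + a * airyLineIntegral 0 x a =
      I * ∫ u in Ioi (0 : ℝ), (u : ℂ) * airyIntegrand 0 x (u + a * I) := by
  unfold airyLineIntegral
  rw [← integral_const_mul, ← integral_const_mul,
    ← integral_add (integrable_airyIntegrand_horizontal 1 _ ha).integrableOn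
      ((integrable_airyIntegrand_horizontal 0 _ ha).const_mul _).integrableOn]
  congr 1 with u
  simp only [airyIntegrand, pow_zero, pow_one, one_mul]
  linear_combination (a * Complex.exp (I * (((u : ℂ) + a * I) ^ 3 / 3 + x * (u + a * I)))) *
    Complex.I_sq

lemma abs_deriv_Ai_add_mul_Ai_le {a : ℝ} (ha : 0 < a) :
    |deriv Ai (a ^ 2) + a * Ai (a ^ 2)| ≤ Real.exp (-(2 / 3) * a ^ 3) * (1 / (2 * π * a)) := by
  have h := norm_integral_pow_mul_airyIntegrand_saddle_le 1 ha
  simp only [pow_one, integral_Ioi_mul_exp_neg_mul_sq ha] at h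
  have hre : deriv Ai (a ^ 2) + a * Ai (a ^ 2) =
      1 / π * (I * ∫ u in Ioi (0 : ℝ), (u : ℂ) * airyIntegrand 0 (a ^ 2) (u + a * I)).re := by
    rw [← airyLineIntegral_one_add_mul_zero _ ha, ← iteratedDeriv_one,
      iteratedDeriv_Ai_eq_airyLineIntegral 1 _ ha, ← iteratedDeriv_zero (f := Ai),
      iteratedDeriv_Ai_eq_airyLineIntegral 0 _ ha, Complex.add_re, Complex.re_ofReal_mul]
    ring
  rw [hre, abs_mul, abs_of_pos (by positivity)]
  calc _ ≤ 1 / π * (Real.exp (-(2 / 3) * a ^ 3) * (2 * a)⁻¹) := by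
        gcongr
        refine (Complex.abs_re_le_norm _).trans ?_
        rwa [norm_mul, Complex.norm_I, one_mul]
    _ = Real.exp (-(2 / 3) * a ^ 3) * (1 / (2 * π * a)) := by
        field_simp

theorem rho_sq_le {a : ℝ} (ha : 1 ≤ a) : rho (a ^ 2) ≤ Real.exp (-(4 / 3) * a ^ 3) := by
  have ha₀ : 0 < a := one_pos.trans_le ha
  have hπ : 3 < π := Real.pi_gt_three
  set E := Real.exp (-(2 / 3) * a ^ 3) with hE
  set S := deriv Ai (a ^ 2) + a * Ai (a ^ 2) with hS
  have hA : |Ai (a ^ 2)| ≤ E * (1 / 2) := by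
    have hsqrt : √(π / a) ≤ π :=
      Real.sqrt_le_iff.2 ⟨Real.pi_pos.le, (div_le_self Real.pi_pos.le ha).trans (by nlinarith)⟩
    refine (abs_Ai_sq_le ha₀).trans (mul_le_mul_of_nonneg_left ?_ (Real.exp_pos _).le)
    rw [div_le_div_iff₀ (by positivity) two_pos]
    linarith
  have hS_le : |S| ≤ E * (1 / (2 * a)) := by
    refine (abs_deriv_Ai_add_mul_Ai_le ha₀).trans ?_
    gcongr
    linarith
  have hS_half : |S| ≤ E * (1 / 2) := by
    refine hS_le.trans ?_
    gcongr
    linarith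
  calc rho (a ^ 2) = S * S - 2 * a * (Ai (a ^ 2) * S) := by
        rw [rho, hS]
        ring
    _ ≤ |S| * |S| + 2 * a * (|Ai (a ^ 2)| * |S|) := by
        rw [abs_mul_abs_self, ← abs_mul]
        linarith [mul_le_mul_of_nonneg_left (neg_abs_le (Ai (a ^ 2) * S))
          (by positivity : 0 ≤ 2 * a)]
    _ ≤ E * (1 / 2) * (E * (1 / 2)) + 2 * a * (E * (1 / 2) * (E * (1 / (2 * a)))) := by
        gcongr
    _ = 3 / 4 * (E * E) := by
        field_simp
        ring
    _ ≤ E * E := by linarith [mul_self_nonneg E]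
    _ = Real.exp (-(4 / 3) * a ^ 3) := by
        rw [hE, ← Real.exp_add]
        ring_nf

lemma hasDerivAt_sum_range_pow_div_factorial (k : ℕ) (z : ℂ) :
    HasDerivAt (fun z : ℂ => ∑ j ∈ Finset.range (k + 1), z ^ j / (j.factorial : ℂ))
      (∑ j ∈ Finset.range k, z ^ j / (j.factorial : ℂ)) z := by
  simp only [Finset.sum_range_succ' _ k, pow_zero]
  refine (HasDerivAt.fun_sum fun j _ => ?_).add_const _
  convert! (hasDerivAt_pow (j + 1) z).div_const ((j + 1).factorial : ℂ) using 1
  rw [Nat.factorial_succ, Nat.cast_mul, add_tsub_cancel_right,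
    mul_div_mul_left _ _ (Nat.cast_ne_zero.2 j.succ_ne_zero)]

lemma norm_exp_sub_sum_range_le (k : ℕ) {m : ℝ} (hm : 0 ≤ m) {w : ℂ} (hw : w.re ≤ m) :
    ‖Complex.exp w - ∑ j ∈ Finset.range k, w ^ j / (j.factorial : ℂ)‖ ≤
      ‖w‖ ^ k * Real.exp m := by
  induction k generalizing w with
  | zero => simpa [Complex.norm_exp] using hw
  | succ k ih =>
    have hconvex : Convex ℝ ({z : ℂ | z.re ≤ m} ∩ Metric.closedBall 0 ‖w‖) :=
      (convex_halfSpace_re_le m).inter (convex_closedBall 0 _)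
    have h := hconvex.norm_image_sub_le_of_norm_hasDerivWithin_le (𝕜 := ℂ)
      (C := ‖w‖ ^ k * Real.exp m) (x := 0) (y := w)
      (fun z _ => ((Complex.hasDerivAt_exp z).sub
        (hasDerivAt_sum_range_pow_div_factorial k z)).hasDerivWithinAt)
      (fun z hz => (ih hz.1).trans ?_) (by simpa using hm) (by simpa using hw)
    · simpa [Finset.sum_range_succ' _ k, pow_succ, mul_right_comm] using h
    · gcongr
      exact mem_closedBall_zero_iff.1 hz.2

/-- The moment `∫ vᵐ e^{-v²} dv` of the Gaussian weight. -/
noncomputable def gaussianMoment (m : ℕ) : ℝ := ∫ v : ℝ, v ^ m * Real.exp (-v ^ 2)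

lemma gaussianMoment_zero : gaussianMoment 0 = √π := by
  simpa [gaussianMoment] using integral_gaussian 1

lemma gaussianMoment_of_odd {m : ℕ} (hm : Odd m) : gaussianMoment m = 0 := by
  have h := integral_neg_eq_self (fun v : ℝ => v ^ m * Real.exp (-v ^ 2)) volume
  simp only [hm.neg_pow, neg_sq, neg_mul, integral_neg] at h
  exact CharZero.neg_eq_self_iff.1 h

/-- The moment of order `n` of the cubic perturbation `e^{-v² - cv³/3}` of the Gaussian weight. The
domain is cut off so that `e^{-cv³/3}` stays below `e^{v²/3}` in modulus. -/
noncomputable def cubicGaussianMoment (n : ℕ) (c : ℂ) : ℂ :=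
  ∫ v in {v : ℝ | -1 < c.re * v}, (v : ℂ) ^ n * Complex.exp (-v ^ 2 - c * v ^ 3 / 3)

lemma measurableSet_neg_one_lt_mul (r : ℝ) : MeasurableSet {v : ℝ | -1 < r * v} :=
  measurableSet_lt measurable_const (measurable_const_mul r)

lemma re_neg_mul_cube_div_three_le {c : ℂ} {v : ℝ} (hv : -1 < c.re * v) :
    (-c * v ^ 3 / 3 : ℂ).re ≤ v ^ 2 / 3 := by
  have hre : (-c * v ^ 3 / 3 : ℂ).re = -(c.re * v) * v ^ 2 / 3 := by
    rw [show (-c * v ^ 3 / 3 : ℂ) = -c * (v ^ 3 / 3 : ℝ) by push_cast; ring,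
      Complex.re_mul_ofReal, Complex.neg_re]
    ring
  rw [hre]
  nlinarith [sq_nonneg v]

/-- The Taylor polynomial of `e^{-cv³/3}` in `c`, truncated below degree `k` and multiplied by
`vⁿ e^{-v²}`. -/
noncomputable def cubicGaussianTaylor (n k : ℕ) (c : ℂ) (v : ℝ) : ℂ :=
  ∑ j ∈ Finset.range k,
    (-c / 3) ^ j / (j.factorial : ℂ) * ((v ^ (n + 3 * j) * Real.exp (-v ^ 2) : ℝ) : ℂ)

lemma cubicGaussianTaylor_eq (n k : ℕ) (c : ℂ) (v : ℝ) :
    cubicGaussianTaylor n k c v = (v : ℂ) ^ n * Complex.exp (-v ^ 2) *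
      ∑ j ∈ Finset.range k, (-c * v ^ 3 / 3) ^ j / (j.factorial : ℂ) := by
  rw [cubicGaussianTaylor, Finset.mul_sum]
  refine Finset.sum_congr rfl fun j _ => ?_
  push_cast
  ring

/-- The envelope of the Taylor remainder of the cubic Gaussian weight. -/
noncomputable def cubicGaussianEnvelope (n k : ℕ) (v : ℝ) : ℝ :=
  ∑ j ∈ Finset.range (k + 1), |v| ^ (n + k + 2 * j) * Real.exp (-(2 / 3) * v ^ 2)

lemma integrable_cubicGaussianEnvelope (n k : ℕ) : Integrable (cubicGaussianEnvelope n k) :=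
  integrable_finsetSum _ fun _ _ => integrable_abs_pow_mul_exp_neg_mul_sq _ (by norm_num)

lemma norm_cubicGaussian_sub_taylor_le (n k : ℕ) {c : ℂ} {v : ℝ} (hv : -1 < c.re * v) :
    ‖(v : ℂ) ^ n * Complex.exp (-v ^ 2 - c * v ^ 3 / 3) - cubicGaussianTaylor n k c v‖ ≤
      ‖c‖ ^ k * (|v| ^ (n + 3 * k) * Real.exp (-(2 / 3) * v ^ 2)) := by
  have hfactor : (v : ℂ) ^ n * Complex.exp (-v ^ 2 - c * v ^ 3 / 3) -
      cubicGaussianTaylor n k c v = (v : ℂ) ^ n * Complex.exp ((-v ^ 2 : ℝ)) *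
        (Complex.exp (-c * v ^ 3 / 3) -
          ∑ j ∈ Finset.range k, (-c * v ^ 3 / 3) ^ j / (j.factorial : ℂ)) := by
    rw [cubicGaussianTaylor_eq, mul_sub, mul_assoc _ _ (Complex.exp (-c * v ^ 3 / 3))]
    push_cast
    rw [← Complex.exp_add]
    ring_nf
  have hnorm : ‖(-c * v ^ 3 / 3 : ℂ)‖ ≤ ‖c‖ * |v| ^ 3 := by
    simp only [norm_div, norm_mul, norm_neg, norm_pow, Complex.norm_real, Real.norm_eq_abs,
      Complex.norm_ofNat]
    exact div_le_self (by positivity) (by norm_num)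
  rw [hfactor, norm_mul, norm_mul, norm_pow, Complex.norm_real, Real.norm_eq_abs,
    Complex.norm_exp_ofReal]
  calc |v| ^ n * Real.exp (-v ^ 2) * _
      ≤ |v| ^ n * Real.exp (-v ^ 2) * ((‖c‖ * |v| ^ 3) ^ k * Real.exp (v ^ 2 / 3)) := by
        gcongr
        refine (norm_exp_sub_sum_range_le k (by positivity)
          (re_neg_mul_cube_div_three_le hv)).trans ?_
        gcongr
    _ = ‖c‖ ^ k * (|v| ^ (n + 3 * k) * (Real.exp (-v ^ 2) * Real.exp (v ^ 2 / 3))) := by ring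
    _ = _ := by
        rw [← Real.exp_add]
        ring_nf

/-- Beyond the half-line `1 ≤ ‖c‖ |v|`, so any missing powers of `‖c‖` may be inserted. -/
lemma norm_cubicGaussianTaylor_le (n k : ℕ) {c : ℂ} {v : ℝ} (hv : c.re * v ≤ -1) :
    ‖cubicGaussianTaylor n k c v‖ ≤
      ‖c‖ ^ k * ∑ j ∈ Finset.range k, |v| ^ (n + k + 2 * j) * Real.exp (-(2 / 3) * v ^ 2) := by
  have hcv : 1 ≤ ‖c‖ * |v| :=
    calc 1 ≤ |c.re * v| := by linarith [neg_abs_le (c.re * v)]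
      _ = |c.re| * |v| := abs_mul _ _
      _ ≤ ‖c‖ * |v| := by
        gcongr
        exact Complex.abs_re_le_norm c
  rw [cubicGaussianTaylor, Finset.mul_sum]
  refine norm_sum_le_of_le _ fun j hj => ?_
  obtain ⟨i, rfl⟩ := Nat.exists_eq_add_of_lt (Finset.mem_range.1 hj)
  have hcoeff : ‖(-c / 3) ^ j / (j.factorial : ℂ)‖ ≤ ‖c‖ ^ j := by
    rw [norm_div, norm_pow, norm_div, norm_neg, Complex.norm_ofNat, Complex.norm_natCast]
    refine (div_le_self (by positivity) (mod_cast j.factorial_pos)).trans ?_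
    gcongr
    exact div_le_self (norm_nonneg c) (by norm_num)
  rw [norm_mul, Complex.norm_real, norm_mul, norm_pow, Real.norm_eq_abs, Real.norm_eq_abs,
    Real.abs_exp]
  calc _ ≤ ‖c‖ ^ j * (|v| ^ (n + 3 * j) * Real.exp (-(2 / 3) * v ^ 2)) := by
        gcongr
        nlinarith [sq_nonneg v]
    _ ≤ ‖c‖ ^ j * (|v| ^ (n + 3 * j) * Real.exp (-(2 / 3) * v ^ 2)) *
          (‖c‖ * |v|) ^ (i + 1) :=
        le_mul_of_one_le_right (by positivity) (one_le_pow₀ hcv)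
    _ = _ := by ring

lemma norm_indicator_cubicGaussian_sub_taylor_le (n k : ℕ) (c : ℂ) (v : ℝ) :
    ‖{v : ℝ | -1 < c.re * v}.indicator
        (fun v => (v : ℂ) ^ n * Complex.exp (-v ^ 2 - c * v ^ 3 / 3)) v -
      cubicGaussianTaylor n k c v‖ ≤ ‖c‖ ^ k * cubicGaussianEnvelope n k v := by
  rw [cubicGaussianEnvelope]
  by_cases hv : v ∈ {v : ℝ | -1 < c.re * v}
  · rw [indicator_of_mem hv]
    refine (norm_cubicGaussian_sub_taylor_le n k hv).trans ?_
    gcongr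
    rw [show n + 3 * k = n + k + 2 * k by ring]
    exact Finset.single_le_sum
      (f := fun j => |v| ^ (n + k + 2 * j) * Real.exp (-(2 / 3) * v ^ 2))
      (fun _ _ => by positivity) (Finset.self_mem_range_succ k)
  · rw [indicator_of_notMem hv, zero_sub, norm_neg]
    refine (norm_cubicGaussianTaylor_le n k (not_lt.1 hv)).trans ?_
    rw [Finset.sum_range_succ]
    gcongr
    exact le_add_of_nonneg_right (by positivity)

lemma integrableOn_cubicGaussian (n : ℕ) (c : ℂ) :
    IntegrableOn (fun v : ℝ => (v : ℂ) ^ n * Complex.exp (-v ^ 2 - c * v ^ 3 / 3))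
      {v | -1 < c.re * v} := by
  have hs := measurableSet_neg_one_lt_mul c.re
  rw [← integrable_indicator_iff hs]
  refine ((integrable_cubicGaussianEnvelope n 0).const_mul (‖c‖ ^ 0)).mono'
    ((Continuous.aestronglyMeasurable (by fun_prop)).indicator hs)
    (Eventually.of_forall fun v => ?_)
  simpa [cubicGaussianTaylor] using norm_indicator_cubicGaussian_sub_taylor_le n 0 c v

lemma integrable_pow_mul_exp_neg_sq (n : ℕ) :
    Integrable fun v : ℝ => v ^ n * Real.exp (-v ^ 2) :=
  (integrable_abs_pow_mul_exp_neg_mul_sq n one_pos).mono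
    (Continuous.aestronglyMeasurable (by fun_prop)) (Eventually.of_forall fun v => by simp)

lemma integrable_cubicGaussianTaylor (n k : ℕ) (c : ℂ) :
    Integrable (cubicGaussianTaylor n k c) :=
  integrable_finsetSum _ fun _ _ => (integrable_pow_mul_exp_neg_sq _).ofReal.const_mul _

lemma integral_cubicGaussianTaylor (n k : ℕ) (c : ℂ) :
    ∫ v, cubicGaussianTaylor n k c v = ∑ j ∈ Finset.range k,
      (-c / 3) ^ j / (j.factorial : ℂ) * gaussianMoment (n + 3 * j) := by
  unfold cubicGaussianTaylor
  rw [integral_finsetSum _ fun _ _ => (integrable_pow_mul_exp_neg_sq _).ofReal.const_mul _]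
  simp only [integral_const_mul, integral_complex_ofReal, gaussianMoment]

theorem cubicGaussianMoment_sub_sum_isBigO (n k : ℕ) :
    (fun c => cubicGaussianMoment n c - ∑ j ∈ Finset.range k,
      (-c / 3) ^ j / (j.factorial : ℂ) * gaussianMoment (n + 3 * j)) =O[⊤] fun c => c ^ k := by
  refine isBigO_top.2 ⟨∫ v, cubicGaussianEnvelope n k v, fun c => ?_⟩
  have hs := measurableSet_neg_one_lt_mul c.re
  rw [← integral_cubicGaussianTaylor, cubicGaussianMoment, ← integral_indicator hs,
    ← integral_sub ((integrable_indicator_iff hs).2 (integrableOn_cubicGaussian n c))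
      (integrable_cubicGaussianTaylor n k c), norm_pow, mul_comm, ← integral_const_mul]
  exact norm_integral_le_of_norm_le ((integrable_cubicGaussianEnvelope n k).const_mul _)
    (Eventually.of_forall (norm_indicator_cubicGaussian_sub_taylor_le n k c))

lemma cubicGaussianMoment_isBigO_one (n : ℕ) :
    cubicGaussianMoment n =O[⊤] fun c => c ^ 0 := by
  simpa using cubicGaussianMoment_sub_sum_isBigO n 0

lemma cubicGaussianMoment_isBigO_of_odd {n : ℕ} (hn : Odd n) :
    cubicGaussianMoment n =O[⊤] fun c => c ^ 1 := by
  simpa [gaussianMoment_of_odd hn] using cubicGaussianMoment_sub_sum_isBigO n 1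

lemma norm_cubicGaussianMoment_zero_sq_sub_pi_isBigO :
    (fun c => ‖cubicGaussianMoment 0 c‖ ^ 2 - π) =O[⊤] fun c => c ^ 2 := by
  have hsub : (fun c => cubicGaussianMoment 0 c - √π) =O[⊤] fun c => c ^ 2 := by
    simpa [Finset.sum_range_succ, gaussianMoment_zero,
      gaussianMoment_of_odd (by decide : Odd 3)] using cubicGaussianMoment_sub_sum_isBigO 0 2
  have hdiff : (fun c => ‖cubicGaussianMoment 0 c‖ - √π) =O[⊤] fun c => c ^ 2 := by
    refine (isBigO_of_le _ fun c => ?_).trans hsub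
    simpa [abs_of_nonneg (Real.sqrt_nonneg π)] using
      abs_norm_sub_norm_le (cubicGaussianMoment 0 c) (√π : ℂ)
  have hsum : (fun c => ‖cubicGaussianMoment 0 c‖ + √π) =O[⊤] fun c : ℂ => c ^ 0 :=
    (cubicGaussianMoment_isBigO_one 0).norm_left.add
      (isBigO_top.2 ⟨√π, fun c => by simp [abs_of_nonneg]⟩)
  refine (hdiff.mul hsum).congr (fun c => ?_) fun c => by ring
  linear_combination -Real.sq_sqrt Real.pi_pos.le

/-- The direction `e^{iπ/4}` of steepest descent at the saddle point `√(-x)`, for `x < 0`. -/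
noncomputable def descentDirection : ℂ := Complex.exp ((π / 4 : ℝ) * I)

lemma norm_descentDirection : ‖descentDirection‖ = 1 := Complex.norm_exp_ofReal_mul_I _

lemma descentDirection_sq : descentDirection ^ 2 = I := by
  rw [descentDirection, ← Complex.exp_nat_mul]
  convert! Complex.exp_pi_div_two_mul_I using 2
  push_cast
  ring

lemma descentDirection_re_pos : 0 < descentDirection.re := by
  rw [descentDirection, Complex.exp_ofReal_mul_I_re, Real.cos_pi_div_four]
  positivity

lemma descentDirection_im : descentDirection.im = descentDirection.re := by
  rw [descentDirection, Complex.exp_ofReal_mul_I_re, Complex.exp_ofReal_mul_I_im,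
    Real.cos_pi_div_four, Real.sin_pi_div_four]

lemma airyIntegrand_descent_ray (k : ℕ) {b : ℝ} (hb : b ≠ 0) (v : ℝ) :
    airyIntegrand k (-b ^ 4) ((b : ℂ) ^ 2 + descentDirection / b * v) =
      (I * ((b : ℂ) ^ 2 + descentDirection / b * v)) ^ k *
        (Complex.exp (-(2 / 3 * b ^ 6 : ℝ) * I) *
          Complex.exp (-v ^ 2 - descentDirection / b ^ 3 * v ^ 3 / 3)) := by
  have hb' : (b : ℂ) ≠ 0 := Complex.ofReal_ne_zero.2 hb
  rw [airyIntegrand, ← Complex.exp_add]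
  congr 2
  push_cast
  field_simp
  linear_combination (3 * b ^ 3 * v ^ 2 * I + v ^ 3 * descentDirection * I) * descentDirection_sq +
    (3 * b ^ 3 * v ^ 2 + v ^ 3 * descentDirection) * Complex.I_sq

/-- The contribution of the term of order `n` in `z - b²` to the integral of the Airy integrand over
the steepest descent ray through the saddle point `b²` of `x = -b⁴`. -/
noncomputable def rayAmplitude (n : ℕ) (b : ℝ) : ℂ :=
  (descentDirection / b) ^ (n + 1) * Complex.exp (-(2 / 3 * b ^ 6 : ℝ) * I) *
    cubicGaussianMoment n (descentDirection / b ^ 3)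

lemma airyIntegrand_descent_ray_eq_sum (k : ℕ) {b : ℝ} (hb : b ≠ 0) (v : ℝ) :
    descentDirection / b *
        airyIntegrand k (-b ^ 4) ((b : ℂ) ^ 2 + descentDirection / b * v) =
      ∑ n ∈ Finset.range (k + 1), I ^ k * k.choose n * ((b : ℂ) ^ 2) ^ (k - n) *
        (descentDirection / b) ^ (n + 1) * Complex.exp (-(2 / 3 * b ^ 6 : ℝ) * I) *
          ((v : ℂ) ^ n * Complex.exp (-v ^ 2 - descentDirection / b ^ 3 * v ^ 3 / 3)) := by
  rw [airyIntegrand_descent_ray k hb, mul_pow, add_comm, add_pow, Finset.mul_sum,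
    Finset.sum_mul, Finset.mul_sum]
  refine Finset.sum_congr rfl fun n _ => ?_
  ring

lemma integrableOn_airyIntegrand_descent_ray (k : ℕ) {b : ℝ} (hb : b ≠ 0) :
    IntegrableOn (fun v : ℝ => descentDirection / b *
      airyIntegrand k (-b ^ 4) ((b : ℂ) ^ 2 + descentDirection / b * v))
      {v | -1 < (descentDirection / (b : ℂ) ^ 3).re * v} := by
  simp only [airyIntegrand_descent_ray_eq_sum k hb]
  exact integrable_finsetSum _ fun n _ => (integrableOn_cubicGaussian n _).const_mul _

lemma integral_airyIntegrand_descent_ray (k : ℕ) {b : ℝ} (hb : b ≠ 0) :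
    ∫ v in {v : ℝ | -1 < (descentDirection / (b : ℂ) ^ 3).re * v}, descentDirection / b *
        airyIntegrand k (-b ^ 4) ((b : ℂ) ^ 2 + descentDirection / b * v) =
      ∑ n ∈ Finset.range (k + 1),
        I ^ k * k.choose n * ((b : ℂ) ^ 2) ^ (k - n) * rayAmplitude n b := by
  simp only [airyIntegrand_descent_ray_eq_sum k hb]
  rw [integral_finsetSum _ fun n _ => (integrableOn_cubicGaussian n _).const_mul _]
  simp only [integral_const_mul, cubicGaussianMoment, rayAmplitude, mul_assoc]

lemma setOf_neg_one_lt_mul {r : ℝ} (hr : 0 < r) : {v : ℝ | -1 < r * v} = Ioi (-1 / r) :=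
  ext fun _ => (div_lt_iff₀' hr).symm

lemma iteratedDeriv_Ai_neg_pow_four {k : ℕ} (hk : k < 2) {b : ℝ} (hb : 0 < b) :
    iteratedDeriv k Ai (-b ^ 4) = 1 / π * (∑ n ∈ Finset.range (k + 1),
      I ^ k * k.choose n * ((b : ℂ) ^ 2) ^ (k - n) * rayAmplitude n b).re := by
  have hω := descentDirection_re_pos
  have hre : (descentDirection / (b : ℂ) ^ 3).re = descentDirection.re / b ^ 3 := by
    rw [← Complex.ofReal_pow, Complex.div_ofReal_re]
  have hdomain := setOf_neg_one_lt_mul (hre ▸ div_pos hω (pow_pos hb 3))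
  have hray (v : ℝ) : ((b : ℂ) ^ 2 + descentDirection / b * v).re =
      b ^ 2 + descentDirection.re / b * v := by
    rw [Complex.add_re, Complex.re_mul_ofReal, Complex.div_ofReal_re, ← Complex.ofReal_pow,
      Complex.ofReal_re]
  have him (v : ℝ) : ((b : ℂ) ^ 2 + descentDirection / b * v).im =
      descentDirection.re / b * v := by
    rw [Complex.add_im, Complex.im_mul_ofReal, Complex.div_ofReal_im, ← Complex.ofReal_pow,
      Complex.ofReal_im, descentDirection_im, zero_add]
  rw [← integral_airyIntegrand_descent_ray k hb.ne', hdomain]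
  have h := iteratedDeriv_Ai_eq_ray_integral hk (x := -b ^ 4)
    (u₀ := -1 / (descentDirection / (b : ℂ) ^ 3).re) (p := (b : ℂ) ^ 2)
    (q := descentDirection / b) ?_ ?_ ?_ ?_
  · simpa only [Complex.ofReal_neg, Complex.ofReal_pow] using h
  · rw [hray, hre]
    field_simp
    ring
  · rw [Complex.div_ofReal_re]
    positivity
  · exact hdomain ▸ integrableOn_airyIntegrand_descent_ray k hb.ne'
  · filter_upwards [eventually_ge_atTop 0] with v hv
    rw [hray, him]
    exact ⟨by positivity, le_add_of_nonneg_left (sq_nonneg b)⟩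

lemma Ai_neg_pow_four {b : ℝ} (hb : 0 < b) :
    Ai (-b ^ 4) = 1 / π * (rayAmplitude 0 b).re := by
  simpa using iteratedDeriv_Ai_neg_pow_four two_pos hb

lemma deriv_Ai_neg_pow_four {b : ℝ} (hb : 0 < b) :
    deriv Ai (-b ^ 4) = -(1 / π * (b ^ 2 * (rayAmplitude 0 b).im + (rayAmplitude 1 b).im)) := by
  have hsum : ∑ n ∈ Finset.range 2, I ^ 1 * Nat.choose 1 n * ((b : ℂ) ^ 2) ^ (1 - n) *
      rayAmplitude n b = I * ((b ^ 2 : ℝ) * rayAmplitude 0 b + rayAmplitude 1 b) := by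
    simp [Finset.sum_range_succ, mul_assoc, mul_add]
  rw [← iteratedDeriv_one, iteratedDeriv_Ai_neg_pow_four one_lt_two hb, hsum, Complex.I_mul_re,
    Complex.add_im, Complex.im_ofReal_mul, mul_neg]

lemma norm_rayAmplitude (n : ℕ) (b : ℝ) :
    ‖rayAmplitude n b‖ =
      (|b| ^ (n + 1))⁻¹ * ‖cubicGaussianMoment n (descentDirection / b ^ 3)‖ := by
  rw [rayAmplitude, norm_mul, norm_mul, ← Complex.ofReal_neg, Complex.norm_exp_ofReal_mul_I,
    mul_one, norm_pow, norm_div, norm_descentDirection, Complex.norm_real, Real.norm_eq_abs,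
    one_div, inv_pow]

lemma isBigO_comp_descentDirection_div {E : Type*} [NormedAddCommGroup E] {f : ℂ → E} {k : ℕ}
    (hf : f =O[⊤] fun c => c ^ k) :
    (fun b : ℝ => f (descentDirection / b ^ 3)) =O[⊤] fun b : ℝ => (b ^ (3 * k))⁻¹ := by
  refine (hf.comp_tendsto tendsto_top).trans (isBigO_of_le _ fun b => ?_)
  simp [norm_descentDirection, pow_mul]

lemma rayAmplitude_isBigO {n k : ℕ} (h : cubicGaussianMoment n =O[⊤] fun c => c ^ k) :
    rayAmplitude n =O[⊤] fun b : ℝ => (b ^ (n + 1 + 3 * k))⁻¹ := by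
  have hpow : (fun b : ℝ => (|b| ^ (n + 1))⁻¹) =O[⊤] fun b => (b ^ (n + 1))⁻¹ :=
    isBigO_of_le _ fun b => by simp
  refine ((hpow.mul (isBigO_comp_descentDirection_div h).norm_left).congr_left
    fun b => (norm_rayAmplitude n b).symm).of_norm_left.congr_right fun b => ?_
  rw [← mul_inv, ← pow_add]

lemma rho_neg_pow_four_sub {b : ℝ} (hb : 0 < b) :
    rho (-b ^ 4) - b ^ 2 / π = (1 / π) ^ 2 *
      (b ^ 2 * (‖cubicGaussianMoment 0 (descentDirection / b ^ 3)‖ ^ 2 - π) +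
        2 * b ^ 2 * ((rayAmplitude 0 b).im * (rayAmplitude 1 b).im) +
        (rayAmplitude 1 b).im ^ 2) := by
  have hnorm : b ^ 2 * ((rayAmplitude 0 b).re ^ 2 + (rayAmplitude 0 b).im ^ 2) =
      ‖cubicGaussianMoment 0 (descentDirection / b ^ 3)‖ ^ 2 := by
    rw [sq (rayAmplitude 0 b).re, sq (rayAmplitude 0 b).im, ← Complex.normSq_apply,
      ← Complex.sq_norm, norm_rayAmplitude, abs_of_pos hb, zero_add, pow_one]
    field_simp
  rw [rho, Ai_neg_pow_four hb, deriv_Ai_neg_pow_four hb, ← hnorm]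
  field_simp
  ring

theorem rho_neg_pow_four_sub_isBigO :
    (fun b : ℝ => rho (-b ^ 4) - b ^ 2 / π) =O[𝓟 (Ici 1)] fun b => (b ^ 4)⁻¹ := by
  have him {n : ℕ} {g : ℝ → ℝ} (h : rayAmplitude n =O[⊤] g) :
      (fun b => (rayAmplitude n b).im) =O[𝓟 (Ici 1)] g :=
    (isBigO_of_le _ fun b => by simpa using Complex.abs_im_le_norm _).trans (h.mono le_top)
  have h₀ : (fun b => (rayAmplitude 0 b).im) =O[𝓟 (Ici 1)] fun b => (b ^ 1)⁻¹ :=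
    him (rayAmplitude_isBigO (cubicGaussianMoment_isBigO_one 0))
  have h₁ : (fun b => (rayAmplitude 1 b).im) =O[𝓟 (Ici 1)] fun b => (b ^ 5)⁻¹ :=
    him (rayAmplitude_isBigO (cubicGaussianMoment_isBigO_of_odd odd_one))
  have hsq : (fun b : ℝ => b ^ 2) =O[𝓟 (Ici 1)] fun b => b ^ 2 := isBigO_refl _ _
  have hpos {b : ℝ} (hb : b ∈ Ici (1 : ℝ)) : 0 < b := one_pos.trans_le hb
  have hmodulus : _ =O[𝓟 (Ici 1)] fun b : ℝ => (b ^ 4)⁻¹ :=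
    (hsq.mul ((isBigO_comp_descentDirection_div
      norm_cubicGaussianMoment_zero_sq_sub_pi_isBigO).mono le_top)).trans_eventuallyEq <|
    eventually_principal.2 fun b hb => by
      have := hpos hb
      field_simp
  have hcross : _ =O[𝓟 (Ici 1)] fun b : ℝ => (b ^ 4)⁻¹ :=
    ((hsq.const_mul_left 2).mul (h₀.mul h₁)).trans_eventuallyEq <|
    eventually_principal.2 fun b hb => by
      have := hpos hb
      field_simp
  have hsquare : _ =O[𝓟 (Ici 1)] fun b : ℝ => (b ^ 4)⁻¹ :=
    (h₁.pow 2).trans <| .of_bound 1 <| eventually_principal.2 fun b hb => by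
      have := hpos hb
      rw [one_mul, ← inv_pow, ← pow_mul, inv_pow, Real.norm_of_nonneg (by positivity),
        Real.norm_of_nonneg (by positivity)]
      gcongr
      norm_num
  refine (((hmodulus.add hcross).add hsquare).const_mul_left ((1 / π) ^ 2)).congr' ?_ .rfl
  exact eventually_principal.2 fun b hb => (rho_neg_pow_four_sub (hpos hb)).symm

theorem rho_le_exp {x : ℝ} (hx : 1 ≤ x) : rho x ≤ Real.exp (-(4 / 3) * x ^ (3 / 2 : ℝ)) := by
  have hx₀ : 0 ≤ x := zero_le_one.trans hx
  have hcube : √x ^ 3 = x ^ (3 / 2 : ℝ) := by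
    rw [Real.sqrt_eq_rpow, ← Real.rpow_mul_natCast hx₀]
    norm_num
  simpa only [Real.sq_sqrt hx₀, hcube] using rho_sq_le (Real.one_le_sqrt.2 hx)

theorem rho_neg_sub_isBigO :
    (fun x : ℝ => rho (-x) - √x / π) =O[𝓟 (Ici 1)] fun x => x⁻¹ := by
  have hmaps : Tendsto (fun x => √√x) (𝓟 (Ici 1)) (𝓟 (Ici 1)) :=
    tendsto_principal_principal.2 fun x hx => Real.one_le_sqrt.2 (Real.one_le_sqrt.2 hx)
  have hsq (x : ℝ) : √√x ^ 2 = √x := Real.sq_sqrt (Real.sqrt_nonneg x)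
  have hfourth : ∀ x ∈ Ici (1 : ℝ), √√x ^ 4 = x := fun x hx => by
    rw [pow_mul _ 2 2, hsq, Real.sq_sqrt (zero_le_one.trans hx)]
  refine (rho_neg_pow_four_sub_isBigO.comp_tendsto hmaps).congr' ?_ ?_ <;>
    refine eventually_principal.2 fun x hx => ?_ <;>
    simp only [Function.comp_apply, hfourth x hx, hsq]

end AiryAsymptotics

/-- asymptotics of the Airy₂ one-point correlation function `ρ`. -/
theorem rho_asymptotics :
    ∃ C : ℝ, 0 < C ∧ ∀ x : ℝ, 1 ≤ x →
      rho x ≤ C * Real.exp (-(4/3) * x ^ ((3:ℝ)/2)) ∧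
      |rho (-x) - Real.sqrt x / Real.pi| ≤ C * x⁻¹ := by
  obtain ⟨C, hC⟩ := Asymptotics.isBigO_principal.1 rho_neg_sub_isBigO
  refine ⟨max 1 C, lt_max_of_lt_left one_pos, fun x hx => ⟨?_, ?_⟩⟩
  · exact (rho_le_exp hx).trans (le_mul_of_one_le_left (Real.exp_pos _).le (le_max_left 1 C))
  · have hinv : 0 ≤ x⁻¹ := inv_nonneg.2 (zero_le_one.trans hx)
    refine (hC x hx).trans ?_
    rw [Real.norm_of_nonneg hinv]
    exact mul_le_mul_of_nonneg_right (le_max_right 1 C) hinv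
end
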